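/- arXiv:2604.13295 — 7 statements merged into one kernel-verified Lean document; each statement's English description precedes it below -/
import Mathlib

section
/- Let g : ℕ → (0,∞) be any function with g(n) → ∞, and let d = d(n) → ∞ satisfy n ≤ 2^{d(n)}. Let X = {x_1, …, x_n} consist of n points sampled independently and uniformly from the unit sphere S^{d−1} ⊂ ℝ^d. Then there is a constant C > 0 such that with probability tending to 1 as n → ∞ the following holds: for every B > 0 and every map f : X → ℝ² with ‖f(x)‖ ≤ B for all x ∈ X, at least (1 − C/g(n)²)·n of the points x ∈ X admit another point y ∈ X, y ≠ x, with ‖x − y‖ ≥ 0.2 and ‖f(x) − f(y)‖ ≤ 3·B·g(n)/√n. -/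
open MeasureTheory Filter Finset

noncomputable section

/-- The uniform (normalized surface) probability measure on the unit sphere in `ℝ^d`. -/
def sphereUniform (d : ℕ) : Measure (Metric.sphere (0 : EuclideanSpace ℝ (Fin d)) 1) :=
  ((volume : Measure (EuclideanSpace ℝ (Fin d))).toSphere Set.univ)⁻¹ •
    (volume : Measure (EuclideanSpace ℝ (Fin d))).toSphere

/-!
A spherical cap of radius `ρ` has measure at most `(ρ + ε) ^ d / ε`: the cone over it is covered by
a ball of radius `ρ + ε` and a copy of the cone shrunk by `1 - ε`. If `n ≤ b ^ d` and `ρ b² < 1`, a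
union bound over the pairs shows that `n` random points are pairwise `ρ`-apart with probability
tending to `1`. In that case a point can only fail if no other point is mapped `r`-close to it,
where `r` is the permitted distance. The images of the failing points are `r`-separated in a ball of
radius `B`, and comparing volumes bounds their number by `(4 B / r) ^ k` in a target of
dimension `k`.
-/

section SphericalCaps

open Metric Module

variable {E : Type*} [NormedAddCommGroup E] [NormedSpace ℝ E]

open scoped Pointwise in
theorem Ioo_smul_subset_ball_union {s : Set E} {x : E} {ρ ε : ℝ} (hε : ε < 1)
    (hs : s ⊆ sphere 0 1 ∩ ball x ρ) :
    Set.Ioo (0 : ℝ) 1 • s ⊆ ball x (ρ + ε) ∪ (1 - ε) • (Set.Ioo (0 : ℝ) 1 • s) := by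
  rintro _ ⟨t, ⟨ht0, ht1⟩, y, hy, rfl⟩
  obtain ⟨hy1, hyx⟩ := hs hy
  rw [mem_sphere_zero_iff_norm] at hy1
  rw [mem_ball, dist_eq_norm] at hyx
  have hε' : 0 < 1 - ε := sub_pos.2 hε
  obtain ht | ht := lt_or_ge t (1 - ε)
  · refine Or.inr ⟨(t / (1 - ε)) • y, ⟨_, ⟨by positivity, (div_lt_one hε').2 ht⟩, y, hy, rfl⟩, ?_⟩
    simp only [smul_smul, mul_div_cancel₀ _ hε'.ne']
  · left
    rw [mem_ball, dist_eq_norm]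
    calc ‖t • y - x‖ = ‖(y - x) - (1 - t) • y‖ := by congr 1; module
      _ ≤ ‖y - x‖ + ‖(1 - t) • y‖ := norm_sub_le _ _
      _ = ‖y - x‖ + (1 - t) := by rw [norm_smul, hy1, Real.norm_of_nonneg (by linarith), mul_one]
      _ < ρ + ε := by linarith

variable [FiniteDimensional ℝ E] [MeasurableSpace E] [BorelSpace E]
  (μ : Measure E) [μ.IsAddHaarMeasure]

theorem addHaar_real_ball_eq_pow_mul (x : E) {r : ℝ} (hr : 0 < r) :
    μ.real (ball x r) = r ^ finrank ℝ E * μ.real (ball 0 1) := by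
  rw [measureReal_def, Measure.addHaar_ball_of_pos μ x hr, ENNReal.toReal_mul,
    ENNReal.toReal_ofReal (by positivity), measureReal_def]

open scoped Pointwise in
theorem mul_addHaar_real_Ioo_smul_le [Nontrivial E] {s : Set E} {x : E} {ρ ε : ℝ} (hρ : 0 ≤ ρ)
    (hε0 : 0 < ε) (hε1 : ε < 1) (hs : s ⊆ sphere 0 1 ∩ ball x ρ) :
    ε * μ.real (Set.Ioo (0 : ℝ) 1 • s) ≤ (ρ + ε) ^ finrank ℝ E * μ.real (ball 0 1) := by
  set V := Set.Ioo (0 : ℝ) 1 • s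
  have hV : V ⊆ ball 0 1 := by
    rintro _ ⟨t, ⟨ht0, ht1⟩, y, hy, rfl⟩
    have hy1 : ‖y‖ = 1 := mem_sphere_zero_iff_norm.1 (hs hy).1
    simpa [norm_smul, hy1, abs_of_pos ht0] using ht1
  have hV_shrink : μ.real ((1 - ε) • V) = (1 - ε) ^ finrank ℝ E * μ.real V := by
    have hε : 0 ≤ 1 - ε := sub_nonneg.2 hε1.le
    rw [measureReal_def, Measure.addHaar_smul_of_nonneg μ hε, ENNReal.toReal_mul,
      ENNReal.toReal_ofReal (pow_nonneg hε _), measureReal_def]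
  have hV_cover : μ.real V ≤ μ.real (ball x (ρ + ε)) + μ.real ((1 - ε) • V) := by
    refine (measureReal_mono (Ioo_smul_subset_ball_union hε1 hs) ?_).trans
      (measureReal_union_le _ _)
    have hV_top : μ V < ⊤ := (measure_mono hV).trans_lt measure_ball_lt_top
    refine (measure_union_lt_top measure_ball_lt_top ?_).ne
    rw [Measure.addHaar_smul]
    exact ENNReal.mul_lt_top ENNReal.ofReal_lt_top hV_top
  rw [addHaar_real_ball_eq_pow_mul μ x (by positivity), hV_shrink] at hV_cover
  have hpow : (1 - ε) ^ finrank ℝ E ≤ 1 - ε :=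
    pow_le_of_le_one (by linarith) (by linarith) finrank_pos.ne'
  linarith [mul_le_mul_of_nonneg_right hpow (measureReal_nonneg (μ := μ) (s := V))]

theorem mul_toSphere_real_ball_le [Nontrivial E] (x : sphere (0 : E) 1) {ρ ε : ℝ} (hρ : 0 ≤ ρ)
    (hε0 : 0 < ε) (hε1 : ε < 1) :
    ε * μ.toSphere.real (ball x ρ) ≤ (ρ + ε) ^ finrank ℝ E * μ.toSphere.real Set.univ := by
  have hcap : ((↑) '' ball x ρ : Set E) ⊆ sphere 0 1 ∩ ball ↑x ρ := by
    rintro _ ⟨y, hy, rfl⟩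
    exact ⟨y.2, hy⟩
  rw [measureReal_def, Measure.toSphere_apply' μ measurableSet_ball, ENNReal.toReal_mul,
    ENNReal.toReal_natCast, Measure.toSphere_real_apply_univ, mul_left_comm ε,
    mul_left_comm (_ ^ _)]
  exact mul_le_mul_of_nonneg_left (mul_addHaar_real_Ioo_smul_le μ hρ hε0 hε1 hcap)
    (Nat.cast_nonneg _)

instance isProbabilityMeasure_sphereUniform (d : ℕ) [NeZero d] :
    IsProbabilityMeasure (sphereUniform d) where
  measure_univ := by
    rw [sphereUniform, Measure.smul_apply, smul_eq_mul]
    exact ENNReal.inv_mul_cancel (Measure.measure_univ_ne_zero.2 (Measure.toSphere_ne_zero _))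
      (measure_ne_top _ _)

theorem sphereUniform_ball_le {d : ℕ} [NeZero d]
    (x : sphere (0 : EuclideanSpace ℝ (Fin d)) 1) {ρ ε : ℝ} (hρ : 0 ≤ ρ) (hε0 : 0 < ε)
    (hε1 : ε < 1) : sphereUniform d (ball x ρ) ≤ ENNReal.ofReal ((ρ + ε) ^ d / ε) := by
  set σ := (volume : Measure (EuclideanSpace ℝ (Fin d))).toSphere
  have : NeZero σ := ⟨Measure.toSphere_ne_zero _⟩
  have hcap := mul_toSphere_real_ball_le volume x hρ hε0 hε1
  rw [finrank_euclideanSpace_fin] at hcap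
  refine ENNReal.le_ofReal_iff_toReal_le (measure_ne_top _ _) (by positivity) |>.2 ?_
  rw [sphereUniform, Measure.smul_apply, smul_eq_mul, ENNReal.toReal_mul, ENNReal.toReal_inv,
    inv_mul_eq_div]
  exact (div_le_div_iff₀ measureReal_univ_pos hε0).2 (by rwa [mul_comm] at hcap)

end SphericalCaps

section SeparatedTuples

open Metric Topology

/-- The tuples whose entries at distinct indices are at distance at least `ρ`. The random point
configurations are shown to land in this set with high probability. -/
def separatedTuples {ι α : Type*} [PseudoMetricSpace α] (ρ : ℝ) : Set (ι → α) :=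
  {x | Pairwise fun i j => ρ ≤ dist (x i) (x j)}

variable {ι α : Type*} [PseudoMetricSpace α]

theorem compl_separatedTuples (ρ : ℝ) :
    (separatedTuples ρ : Set (ι → α))ᶜ =
      ⋃ p ∈ {p : ι × ι | p.1 ≠ p.2}, {x | dist (x p.1) (x p.2) < ρ} := by
  ext x
  simp [separatedTuples, Pairwise]

theorem isClosed_separatedTuples (ρ : ℝ) : IsClosed (separatedTuples ρ : Set (ι → α)) := by
  simp only [separatedTuples, Pairwise, Set.ofPred_forall]
  exact isClosed_iInter fun i => isClosed_iInter fun j => isClosed_iInter fun _ =>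
    isClosed_le continuous_const (by fun_prop)

variable [SecondCountableTopology α] [MeasurableSpace α] [BorelSpace α]
  [Fintype ι] {ν : ι → Measure α} [∀ i, IsProbabilityMeasure (ν i)] {ρ : ℝ} {c : ENNReal}

theorem measurePi_dist_lt_le {i j : ι} (hij : i ≠ j) (hc : ∀ a, ν j (ball a ρ) ≤ c) :
    Measure.pi ν {x | dist (x i) (x j) < ρ} ≤ c := by
  have hlaw : (Measure.pi ν).map (fun x => (x i, x j)) = (ν i).prod (ν j) := by
    have hindep : ProbabilityTheory.IndepFun (fun x => x i) (fun x => x j) (Measure.pi ν) :=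
      (ProbabilityTheory.iIndepFun_pi (μ := ν) (X := fun _ => id)
        fun _ => aemeasurable_id).indepFun hij
    rw [ProbabilityTheory.indepFun_iff_map_prod_eq_prod_map_map
      (measurable_pi_apply i).aemeasurable (measurable_pi_apply j).aemeasurable] at hindep
    simpa only [(measurePreserving_eval ν _).map_eq] using hindep
  have hmeas : MeasurableSet {p : α × α | dist p.1 p.2 < ρ} :=
    (isOpen_lt (by fun_prop) continuous_const).measurableSet
  calc Measure.pi ν {x | dist (x i) (x j) < ρ}
      = (ν i).prod (ν j) {p | dist p.1 p.2 < ρ} := by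
        rw [← hlaw, Measure.map_apply (by fun_prop) hmeas, Set.preimage_ofPred_eq]
    _ = ∫⁻ a, ν j (ball a ρ) ∂ν i := by
        simp only [Measure.prod_apply hmeas, Set.preimage_ofPred_eq, ball, dist_comm]
    _ ≤ ∫⁻ _, c ∂ν i := lintegral_mono hc
    _ = c := by simp

theorem measurePi_compl_separatedTuples_le (hc : ∀ i a, ν i (ball a ρ) ≤ c) :
    Measure.pi ν (separatedTuples ρ)ᶜ ≤ Fintype.card ι ^ 2 * c := by
  classical
  let offDiagonal : Finset (ι × ι) := {p | p.1 ≠ p.2}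
  have hcard : offDiagonal.card ≤ Fintype.card ι ^ 2 :=
    (card_le_univ _).trans_eq (by rw [Fintype.card_prod, sq])
  calc Measure.pi ν (separatedTuples ρ)ᶜ
      = Measure.pi ν (⋃ p ∈ offDiagonal, {x | dist (x p.1) (x p.2) < ρ}) := by
        simp [compl_separatedTuples, offDiagonal]
    _ ≤ ∑ p ∈ offDiagonal, Measure.pi ν {x | dist (x p.1) (x p.2) < ρ} :=
        measure_biUnion_finset_le _ _
    _ ≤ offDiagonal.card • c := sum_le_card_nsmul _ _ _ fun p hp =>
        measurePi_dist_lt_le (by simpa [offDiagonal] using hp) (hc p.2)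
    _ ≤ Fintype.card ι ^ 2 * c := by
        rw [nsmul_eq_mul]
        gcongr
        exact_mod_cast hcard

theorem measurePi_sphereUniform_compl_separatedTuples_le {d n : ℕ} [NeZero d] {ρ ε b : ℝ}
    (hρ : 0 ≤ ρ) (hε0 : 0 < ε) (hε1 : ε < 1) (hn : (n : ℝ) ≤ b ^ d) :
    Measure.pi (fun _ : Fin n => sphereUniform d) (separatedTuples ρ)ᶜ ≤
      ENNReal.ofReal (((ρ + ε) * b ^ 2) ^ d / ε) := by
  refine (measurePi_compl_separatedTuples_le fun _ x =>
    sphereUniform_ball_le x hρ hε0 hε1).trans ?_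
  rw [Fintype.card_fin, ← ENNReal.ofReal_natCast, ← ENNReal.ofReal_pow n.cast_nonneg,
    ← ENNReal.ofReal_mul (by positivity)]
  refine ENNReal.ofReal_le_ofReal ?_
  calc (n : ℝ) ^ 2 * ((ρ + ε) ^ d / ε) ≤ (b ^ d) ^ 2 * ((ρ + ε) ^ d / ε) := by gcongr
    _ = ((ρ + ε) * b ^ 2) ^ d / ε := by rw [mul_pow _ (b ^ 2), pow_right_comm b]; ring

theorem tendsto_measurePi_separatedTuples {ρ b : ℝ} (hρ : 0 ≤ ρ) (hρb : ρ * b ^ 2 < 1)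
    {d : ℕ → ℕ} (hd : Tendsto d atTop atTop) (hnd : ∀ n : ℕ, (n : ℝ) ≤ b ^ d n) :
    Tendsto (fun n : ℕ => Measure.pi (fun _ : Fin n => sphereUniform (d n)) (separatedTuples ρ))
      atTop (𝓝 1) := by
  obtain ⟨ε, hεb, hε0, hε1⟩ : ∃ ε : ℝ, (ρ + ε) * b ^ 2 < 1 ∧ 0 < ε ∧ ε < 1 := by
    have hlim : Tendsto (fun ε : ℝ => (ρ + ε) * b ^ 2) (𝓝[>] 0) (𝓝 ((ρ + 0) * b ^ 2)) :=
      (by fun_prop : Continuous fun ε : ℝ => (ρ + ε) * b ^ 2).continuousWithinAt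
    exact ((hlim.eventually_lt_const (by simpa using hρb)).and (Ioo_mem_nhdsGT one_pos)).exists
  have hbound : Tendsto (fun n => ENNReal.ofReal (((ρ + ε) * b ^ 2) ^ d n / ε)) atTop (𝓝 0) := by
    simpa using ENNReal.tendsto_ofReal
      (((tendsto_pow_atTop_nhds_zero_of_lt_one (by positivity) hεb).comp hd).div_const ε)
  have hcompl : Tendsto (fun n : ℕ =>
      Measure.pi (fun _ : Fin n => sphereUniform (d n)) (separatedTuples ρ)ᶜ) atTop (𝓝 0) := by
    refine tendsto_of_tendsto_of_tendsto_of_le_of_le' tendsto_const_nhds hbound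
      (Eventually.of_forall fun _ => zero_le) ?_
    filter_upwards [hd.eventually_ne_atTop 0] with n hdn
    have : NeZero (d n) := ⟨hdn⟩
    exact measurePi_sphereUniform_compl_separatedTuples_le hρ hε0 hε1 (hnd n)
  have hone_sub := ENNReal.Tendsto.sub tendsto_const_nhds hcompl (Or.inl ENNReal.one_ne_top)
  rw [tsub_zero] at hone_sub
  refine hone_sub.congr' ?_
  filter_upwards [hd.eventually_ne_atTop 0] with n hdn
  have : NeZero (d n) := ⟨hdn⟩
  rw [← prob_compl_eq_one_sub (isClosed_separatedTuples ρ).measurableSet.compl, compl_compl]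

end SeparatedTuples

section Packing

open Metric Module

variable {F : Type*} [NormedAddCommGroup F] [NormedSpace ℝ F] [FiniteDimensional ℝ F]
  {ι : Type*} {f : ι → F} {B r : ℝ} {T : Finset ι}

theorem card_mul_pow_le_of_separated (hB : 0 ≤ B) (hr : 0 < r) (hf : ∀ i ∈ T, ‖f i‖ ≤ B)
    (hsep : (T : Set ι).Pairwise fun i j => r ≤ ‖f i - f j‖) :
    T.card * (r / 2) ^ finrank ℝ F ≤ (B + r / 2) ^ finrank ℝ F := by
  borelize F
  let μ : Measure F := Measure.addHaar
  have hdisj : (T : Set ι).PairwiseDisjoint fun i => ball (f i) (r / 2) := fun i hi j hj hij =>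
    ball_disjoint_ball (by rw [add_halves, dist_eq_norm]; exact hsep hi hj hij)
  have hsub : ⋃ i ∈ T, ball (f i) (r / 2) ⊆ ball 0 (B + r / 2) :=
    Set.iUnion₂_subset fun i hi => ball_subset_ball' (by
      rw [dist_zero_right]
      linarith [hf i hi])
  have hunit : 0 < μ.real (ball 0 1) :=
    ENNReal.toReal_pos (measure_ball_pos μ 0 one_pos).ne' measure_ball_lt_top.ne
  refine le_of_mul_le_mul_right ?_ hunit
  calc T.card * (r / 2) ^ finrank ℝ F * μ.real (ball 0 1)
      = ∑ i ∈ T, μ.real (ball (f i) (r / 2)) := by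
        simp only [addHaar_real_ball_eq_pow_mul μ _ (half_pos hr), sum_const, nsmul_eq_mul,
          mul_assoc]
    _ = μ.real (⋃ i ∈ T, ball (f i) (r / 2)) :=
        (measureReal_biUnion_finset hdisj (fun _ _ => measurableSet_ball)
          fun _ _ => measure_ball_lt_top.ne).symm
    _ ≤ μ.real (ball 0 (B + r / 2)) := measureReal_mono hsub measure_ball_lt_top.ne
    _ = (B + r / 2) ^ finrank ℝ F * μ.real (ball 0 1) :=
        addHaar_real_ball_eq_pow_mul μ 0 (by positivity)

theorem card_isolated_le [Nontrivial ι] (hr : 0 < r) (hf : ∀ i, ‖f i‖ ≤ B)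
    (hT : ∀ i ∈ T, ∀ j ≠ i, r < ‖f i - f j‖) : T.card ≤ (4 * B / r) ^ finrank ℝ F := by
  have hB : 0 ≤ B := (norm_nonneg _).trans (hf (Classical.arbitrary ι))
  obtain rfl | ⟨i, hi⟩ := T.eq_empty_or_nonempty
  · simp only [card_empty, Nat.cast_zero]
    positivity
  have hrB : r < 2 * B := by
    obtain ⟨j, hj⟩ := exists_ne i
    linarith [hT i hi j hj, norm_sub_le (f i) (f j), hf i, hf j]
  have hpack := card_mul_pow_le_of_separated hB hr (fun i _ => hf i)
    fun i hi j _ hij => (hT i hi j hij.symm).le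
  calc (T.card : ℝ) ≤ (B + r / 2) ^ finrank ℝ F / (r / 2) ^ finrank ℝ F :=
        (le_div_iff₀ (by positivity)).2 hpack
    _ ≤ (2 * B) ^ finrank ℝ F / (r / 2) ^ finrank ℝ F := by
        gcongr
        linarith
    _ = (4 * B / r) ^ finrank ℝ F := by
        rw [← div_pow]
        congr 1
        ring

theorem card_sub_pow_le_card_of_isolated_compl [Fintype ι] [Nontrivial ι] (hr : 0 < r)
    (hf : ∀ i, ‖f i‖ ≤ B) (hT : ∀ i ∉ T, ∀ j ≠ i, r < ‖f i - f j‖) :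
    Fintype.card ι - (4 * B / r) ^ finrank ℝ F ≤ T.card := by
  classical
  have hcompl : (Tᶜ.card : ℝ) ≤ (4 * B / r) ^ finrank ℝ F :=
    card_isolated_le hr hf fun i hi => hT i (mem_compl.1 hi)
  have hcard : (T.card : ℝ) + Tᶜ.card = Fintype.card ι := by
    exact_mod_cast card_add_card_compl T
  linarith

theorem one_sub_mul_card_le_card_of_isolated_compl [Nontrivial F] [Fintype ι] [Nontrivial ι]
    {γ : ℝ} (hB : 0 < B) (hγ : 0 < γ) (hf : ∀ i, ‖f i‖ ≤ B)
    (hT : ∀ i ∉ T, ∀ j ≠ i,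
      3 * B * γ / (Fintype.card ι : ℝ) ^ (1 / finrank ℝ F : ℝ) < ‖f i - f j‖) :
    (1 - (4 / 3) ^ finrank ℝ F / γ ^ finrank ℝ F) * Fintype.card ι ≤ T.card := by
  set w := (Fintype.card ι : ℝ) ^ (1 / finrank ℝ F : ℝ) with hw
  have hw_pos : 0 < w := by positivity
  have hw_pow : w ^ finrank ℝ F = Fintype.card ι := by
    rw [hw, one_div, Real.rpow_inv_natCast_pow (Nat.cast_nonneg _) finrank_pos.ne']
  have hratio : 4 * B / (3 * B * γ / w) = 4 / 3 / γ * w := by field_simp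
  calc (1 - (4 / 3) ^ finrank ℝ F / γ ^ finrank ℝ F) * Fintype.card ι
      = Fintype.card ι - (4 * B / (3 * B * γ / w)) ^ finrank ℝ F := by
        rw [hratio, mul_pow, hw_pow, div_pow _ γ, sub_mul, one_mul]
    _ ≤ T.card := card_sub_pow_le_card_of_isolated_compl (by positivity) hf hT

end Packing

open Module in
theorem stmt0_general {F : Type*} [NormedAddCommGroup F] [NormedSpace ℝ F]
    [FiniteDimensional ℝ F] [Nontrivial F] {ρ b : ℝ} (hρ : 0 ≤ ρ) (hρb : ρ * b ^ 2 < 1)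
    (g : ℕ → ℝ) (hg : ∀ n, 0 < g n)
    (d : ℕ → ℕ) (hd : Tendsto d atTop atTop) (hnd : ∀ n : ℕ, (n : ℝ) ≤ b ^ d n) :
    ∃ C : ℝ, 0 < C ∧
      Tendsto (fun n : ℕ =>
        Measure.pi (fun _ : Fin n => sphereUniform (d n))
          {x : Fin n → Metric.sphere (0 : EuclideanSpace ℝ (Fin (d n))) 1 |
            ∀ B : ℝ, 0 < B → ∀ f : Fin n → F, (∀ i, ‖f i‖ ≤ B) →
              (1 - C / g n ^ finrank ℝ F) * n ≤
                (Finset.univ.filter (fun i : Fin n => ∃ j : Fin n, j ≠ i ∧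
                  ρ ≤ ‖(x i : EuclideanSpace ℝ (Fin (d n))) - x j‖ ∧
                  ‖f i - f j‖ ≤ 3 * B * g n / (n : ℝ) ^ (1 / finrank ℝ F : ℝ))).card})
        atTop (nhds 1) := by
  refine ⟨(4 / 3) ^ finrank ℝ F, by positivity, tendsto_of_tendsto_of_tendsto_of_le_of_le'
    (tendsto_measurePi_separatedTuples hρ hρb hd hnd) tendsto_const_nhds ?_ ?_⟩
  · filter_upwards [eventually_ge_atTop 2] with n hn
    refine measure_mono fun x hx B hB f hf => ?_
    have : Nontrivial (Fin n) := Fin.nontrivial_iff_two_le.2 hn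
    have hcount := fun T => one_sub_mul_card_le_card_of_isolated_compl (T := T) hB (hg n) hf
    rw [Fintype.card_fin] at hcount
    refine hcount _ fun i hi j hji => ?_
    by_contra! hle
    exact hi (mem_filter.2 ⟨mem_univ i, j, hji, hx hji.symm, hle⟩)
  · filter_upwards [hd.eventually_ne_atTop 0] with n hdn
    have : NeZero (d n) := ⟨hdn⟩
    exact prob_le_one

/-- for `n` i.i.d. uniform points on `S^{d-1}` (with `n ≤ 2^d`, `d = d(n) → ∞`),
there is a constant `C > 0` such that with probability tending to `1` as `n → ∞`,
for every `B > 0` and every map `f` of the points into the ball of radius `B` of `ℝ²`,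
at least `(1 - C/g(n)²)·n` of the points `x` admit another point `y ≠ x` with
`‖x - y‖ ≥ 0.2` and `‖f(x) - f(y)‖ ≤ 3·B·g(n)/√n`. -/
theorem stmt0 (g : ℕ → ℝ) (hg : ∀ n, 0 < g n) (hg' : Tendsto g atTop atTop)
    (d : ℕ → ℕ) (hd : Tendsto d atTop atTop) (hnd : ∀ n : ℕ, (n : ℝ) ≤ 2 ^ d n) :
    ∃ C : ℝ, 0 < C ∧
      Tendsto (fun n : ℕ =>
        Measure.pi (fun _ : Fin n => sphereUniform (d n))
          {x : Fin n → Metric.sphere (0 : EuclideanSpace ℝ (Fin (d n))) 1 |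
            ∀ B : ℝ, 0 < B → ∀ f : Fin n → EuclideanSpace ℝ (Fin 2),
              (∀ i, ‖f i‖ ≤ B) →
              (1 - C / g n ^ 2) * n ≤
                (Finset.univ.filter (fun i : Fin n => ∃ j : Fin n, j ≠ i ∧
                  0.2 ≤ ‖(x i : EuclideanSpace ℝ (Fin (d n))) - (x j : EuclideanSpace ℝ (Fin (d n)))‖ ∧
                  ‖f i - f j‖ ≤ 3 * B * g n / Real.sqrt n)).card})
        atTop (nhds 1) := by
  simpa only [finrank_euclideanSpace_fin, Nat.cast_ofNat, ← Real.sqrt_eq_rpow] using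
    stmt0_general (F := EuclideanSpace ℝ (Fin 2)) (ρ := 0.2) (b := 2) (by norm_num) (by norm_num)
      g hg d hd hnd

end
end

section
/- Let X = {x_1, …, x_n} ⊂ ℝ^d be an equidistant set, i.e., there is ρ > 0 with ‖x_i − x_j‖ = ρ for all i ≠ j, let σ_1, …, σ_n > 0 be arbitrary bandwidths, and let the t-SNE output dimension be s with n > s + 1. Then every global minimizer (y_1, …, y_n) ∈ (ℝ^s)^n of the t-SNE objective D(P‖Q) — that is, every tuple attaining the infimum of D(P‖Q) over all tuples in (ℝ^s)^n — satisfies y_1 = y_2 = ⋯ = y_n. -/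
open Finset

noncomputable section

/-- t-SNE conditional probability `p_{j|i}`. -/
def pcond {N d : ℕ} (x : Fin N → EuclideanSpace ℝ (Fin d)) (σ : Fin N → ℝ) (i j : Fin N) : ℝ :=
  Real.exp (-‖x i - x j‖ ^ 2 / (2 * σ i ^ 2)) /
    ∑ k ∈ Finset.univ.erase i, Real.exp (-‖x i - x k‖ ^ 2 / (2 * σ i ^ 2))

/-- t-SNE pair probability `p_{ij} = (p_{i|j} + p_{j|i})/N`. -/
def pmat {N d : ℕ} (x : Fin N → EuclideanSpace ℝ (Fin d)) (σ : Fin N → ℝ) (i j : Fin N) : ℝ :=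
  (pcond x σ j i + pcond x σ i j) / N

/-- Normalization constant `Z` of the t-SNE output similarities. -/
def Zsum {N s : ℕ} (y : Fin N → EuclideanSpace ℝ (Fin s)) : ℝ :=
  ∑ i, ∑ j, if i < j then (1 + ‖y i - y j‖ ^ 2)⁻¹ else 0

/-- t-SNE output pair probability `q_{ij}`. -/
def qmat {N s : ℕ} (y : Fin N → EuclideanSpace ℝ (Fin s)) (i j : Fin N) : ℝ :=
  (1 + ‖y i - y j‖ ^ 2)⁻¹ / Zsum y

/-- KL divergence between two arrays indexed by unordered pairs `{i,j}`, `i < j`. -/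
def KLpairs {N : ℕ} (p q : Fin N → Fin N → ℝ) : ℝ :=
  ∑ i, ∑ j, if i < j then p i j * Real.log (p i j / q i j) else 0

/-!
On an equidistant set every `p_{j|i}` is `1/(n-1)` whatever the bandwidths are, so `P` is the
uniform distribution on pairs, and so is `Q` when all output points coincide. Hence the minimum of
`D(P‖Q)` is `0`, and by the equality case of Gibbs' inequality it is attained only when `Q` is
uniform, that is, when the output points are pairwise equidistant. But pairwise equidistant distinct
points are affinely independent, so at most `s + 1` of them fit into `ℝ^s`.
-/

section Equidistant

variable {ι V P : Type*} [NormedAddCommGroup V] [InnerProductSpace ℝ V] [MetricSpace P]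
  [NormedAddTorsor V P] {p : ι → P} {r : ℝ}

lemma inner_weightedVSub_self_of_pairwise_dist_eq (hp : Pairwise fun i j ↦ dist (p i) (p j) = r)
    {t : Finset ι} {w : ι → ℝ} (hw : ∑ i ∈ t, w i = 0) :
    inner ℝ (t.weightedVSub p w) (t.weightedVSub p w) = r ^ 2 / 2 * ∑ i ∈ t, w i ^ 2 := by
  classical
  have dist_mul_dist (i j : ι) :
      dist (p i) (p j) * dist (p i) (p j) = r ^ 2 - if i = j then r ^ 2 else 0 := by
    rcases eq_or_ne i j with rfl | hij
    · simp
    · rw [hp hij, if_neg hij, sub_zero, sq]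
  have sum_row (i : ι) (hi : i ∈ t) :
      ∑ j ∈ t, w i * w j * (dist (p i) (p j) * dist (p i) (p j)) = -(r ^ 2 * w i ^ 2) := by
    simp only [dist_mul_dist, mul_sub, mul_ite, mul_zero, sum_sub_distrib, ← sum_mul, ← mul_sum,
      hw, zero_mul, sum_ite_eq, if_pos hi]
    ring
  rw [EuclideanGeometry.inner_weightedVSub p hw p hw, sum_congr rfl sum_row, sum_neg_distrib,
    ← mul_sum]
  ring

lemma affineIndependent_of_pairwise_dist_eq (hr : r ≠ 0)
    (hp : Pairwise fun i j ↦ dist (p i) (p j) = r) : AffineIndependent ℝ p := by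
  intro t w hw hwp i hi
  have sum_sq_eq_zero : ∑ i ∈ t, w i ^ 2 = 0 := by
    have h := inner_weightedVSub_self_of_pairwise_dist_eq hp hw
    rw [hwp, inner_zero_left, zero_eq_mul] at h
    exact h.resolve_left (by positivity)
  exact pow_eq_zero_iff two_ne_zero |>.1 <|
    (sum_eq_zero_iff_of_nonneg fun j _ ↦ sq_nonneg (w j)).1 sum_sq_eq_zero i hi

lemma eq_of_pairwise_dist_eq_of_finrank_lt [Fintype ι] [FiniteDimensional ℝ V]
    (hcard : Module.finrank ℝ V + 1 < Fintype.card ι)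
    (hp : Pairwise fun i j ↦ dist (p i) (p j) = r) (i j : ι) : p i = p j := by
  have hr : r = 0 := by
    by_contra hr
    have h_card_le := (affineIndependent_of_pairwise_dist_eq hr hp).card_le_finrank_succ
    have h_finrank_le := (vectorSpan ℝ (Set.range p)).finrank_le
    omega
  rcases eq_or_ne i j with rfl | hij
  · rfl
  · exact dist_eq_zero.1 ((hp hij).trans hr)

end Equidistant

section Gibbs

open InformationTheory

lemma mul_log_div_eq_klFun {a b : ℝ} (hb : b ≠ 0) :
    a * Real.log (a / b) = b * klFun (a / b) + (a - b) := by
  rw [klFun_apply]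
  field_simp
  ring

-- Equality case of Gibbs' inequality: up to terms that cancel, the divergence is a sum of
-- nonnegative terms `q k * klFun (p k / q k)`, each vanishing only at `p k / q k = 1`.
lemma eq_of_sum_mul_log_div_nonpos {κ : Type*} {t : Finset κ} {p q : κ → ℝ}
    (hp : ∀ k ∈ t, 0 ≤ p k) (hq : ∀ k ∈ t, 0 < q k) (hpq : ∑ k ∈ t, p k = ∑ k ∈ t, q k)
    (h : ∑ k ∈ t, p k * Real.log (p k / q k) ≤ 0) {k : κ} (hk : k ∈ t) : p k = q k := by
  have h_ratio (l : κ) (hl : l ∈ t) : 0 ≤ p l / q l := div_nonneg (hp l hl) (hq l hl).le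
  have h_term (l : κ) (hl : l ∈ t) : 0 ≤ q l * klFun (p l / q l) :=
    mul_nonneg (hq l hl).le (klFun_nonneg (h_ratio l hl))
  have h_sum : ∑ l ∈ t, q l * klFun (p l / q l) ≤ 0 := by
    rwa [sum_congr rfl fun l hl ↦ mul_log_div_eq_klFun (a := p l) (hq l hl).ne', sum_add_distrib,
      sum_sub_distrib, hpq, sub_self, add_zero] at h
  have h_zero : q k * klFun (p k / q k) = 0 :=
    (sum_eq_zero_iff_of_nonneg h_term).1 (h_sum.antisymm (sum_nonneg h_term)) k hk
  have h_klFun : klFun (p k / q k) = 0 := (mul_eq_zero.1 h_zero).resolve_left (hq k hk).ne'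
  exact eq_of_div_eq_one ((klFun_eq_zero_iff (h_ratio k hk)).1 h_klFun)

end Gibbs

/-- The unordered pairs of distinct indices, each encoded as the ordered pair `(i, j)` with
`i < j`; the sums defining `Zsum` and `KLpairs` range over it. -/
def ltPairs (N : ℕ) : Finset (Fin N × Fin N) := {e | e.1 < e.2}

section Pairs

variable {N : ℕ}

@[simp]
lemma mem_ltPairs {e : Fin N × Fin N} : e ∈ ltPairs N ↔ e.1 < e.2 := by
  simp [ltPairs]

lemma sum_sum_ite_lt (f : Fin N → Fin N → ℝ) :
    (∑ i, ∑ j, if i < j then f i j else 0) = ∑ e ∈ ltPairs N, f e.1 e.2 := by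
  rw [ltPairs, sum_filter, Fintype.sum_prod_type]

lemma ltPairs_nonempty (hN : 1 < N) : (ltPairs N).Nonempty :=
  ⟨(⟨0, by omega⟩, ⟨1, hN⟩), by simp⟩

lemma two_mul_card_ltPairs (N : ℕ) : 2 * (#(ltPairs N) : ℝ) = N * (N - 1) := by
  calc 2 * (#(ltPairs N) : ℝ)
      = ∑ e ∈ ltPairs N, ((1 : ℝ) + 1) := by rw [sum_const, nsmul_eq_mul]; ring
    _ = ∑ i : Fin N, ∑ j ∈ Ioi i, ((1 : ℝ) + 1) := by
        simp only [← sum_sum_ite_lt fun _ _ ↦ (1 : ℝ) + 1, ← sum_filter, filter_lt_eq_Ioi]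
    _ = ∑ i : Fin N, ∑ _j ∈ {i}ᶜ, (1 : ℝ) := sum_sum_Ioi_add_eq_sum_sum_off_diag fun _ _ ↦ 1
    _ = N * (N - 1) := by
        simp only [sum_const, card_compl, card_singleton, card_univ, Fintype.card_fin,
          nsmul_eq_mul, mul_one]
        cases N <;> simp

lemma KLpairs_eq_sum (p q : Fin N → Fin N → ℝ) :
    KLpairs p q = ∑ e ∈ ltPairs N, p e.1 e.2 * Real.log (p e.1 e.2 / q e.1 e.2) :=
  sum_sum_ite_lt fun i j ↦ p i j * Real.log (p i j / q i j)

lemma KLpairs_eq_zero_of_eq {p q : Fin N → Fin N → ℝ} (h : ∀ i j, i < j → p i j = q i j) :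
    KLpairs p q = 0 := by
  rw [KLpairs_eq_sum]
  refine sum_eq_zero fun e he ↦ ?_
  rw [h _ _ (mem_ltPairs.1 he), Real.log_div_self, mul_zero]

lemma eq_of_KLpairs_nonpos {p q : Fin N → Fin N → ℝ} (hp : ∀ i j, i < j → 0 ≤ p i j)
    (hq : ∀ i j, i < j → 0 < q i j)
    (hpq : ∑ e ∈ ltPairs N, p e.1 e.2 = ∑ e ∈ ltPairs N, q e.1 e.2) (h : KLpairs p q ≤ 0)
    {i j : Fin N} (hij : i < j) : p i j = q i j := by
  rw [KLpairs_eq_sum] at h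
  have h_mem : (i, j) ∈ ltPairs N := mem_ltPairs.2 hij
  exact eq_of_sum_mul_log_div_nonpos (p := fun e ↦ p e.1 e.2) (q := fun e ↦ q e.1 e.2)
    (fun e he ↦ hp _ _ (mem_ltPairs.1 he)) (fun e he ↦ hq _ _ (mem_ltPairs.1 he)) hpq h h_mem

end Pairs

section InputSimilarities

variable {N d : ℕ} {x : Fin N → EuclideanSpace ℝ (Fin d)} {ρ : ℝ}

lemma pcond_of_equidistant (hx : ∀ i j, i ≠ j → ‖x i - x j‖ = ρ) (σ : Fin N → ℝ) {i j : Fin N}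
    (hij : i ≠ j) : pcond x σ i j = ((N : ℝ) - 1)⁻¹ := by
  have h_card : (#(univ.erase i) : ℝ) = N - 1 := by
    rw [cast_card_erase_of_mem (mem_univ i), card_univ, Fintype.card_fin]
  rw [pcond, hx i j hij, sum_congr rfl fun k hk ↦ by rw [hx i k (ne_of_mem_erase hk).symm],
    sum_const, nsmul_eq_mul, h_card, div_mul_cancel_right₀ (Real.exp_ne_zero _)]

lemma pmat_of_equidistant (hx : ∀ i j, i ≠ j → ‖x i - x j‖ = ρ) (σ : Fin N → ℝ) {i j : Fin N}
    (hij : i ≠ j) : pmat x σ i j = (#(ltPairs N) : ℝ)⁻¹ := by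
  have h_card : (#(ltPairs N) : ℝ) = N * (N - 1) / 2 := by
    linarith [two_mul_card_ltPairs N]
  rw [pmat, pcond_of_equidistant hx σ hij, pcond_of_equidistant hx σ hij.symm, h_card, inv_div,
    ← two_mul, ← div_eq_mul_inv, div_div, mul_comm (N : ℝ)]

end InputSimilarities

section OutputSimilarities

variable {N s : ℕ}

lemma Zsum_eq_sum (y : Fin N → EuclideanSpace ℝ (Fin s)) :
    Zsum y = ∑ e ∈ ltPairs N, (1 + ‖y e.1 - y e.2‖ ^ 2)⁻¹ :=
  sum_sum_ite_lt fun i j ↦ (1 + ‖y i - y j‖ ^ 2)⁻¹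

lemma Zsum_pos (hN : 1 < N) (y : Fin N → EuclideanSpace ℝ (Fin s)) : 0 < Zsum y := by
  rw [Zsum_eq_sum]
  exact sum_pos (fun e _ ↦ by positivity) (ltPairs_nonempty hN)

lemma qmat_pos (hN : 1 < N) (y : Fin N → EuclideanSpace ℝ (Fin s)) (i j : Fin N) :
    0 < qmat y i j :=
  div_pos (by positivity) (Zsum_pos hN y)

lemma qmat_comm (y : Fin N → EuclideanSpace ℝ (Fin s)) (i j : Fin N) :
    qmat y i j = qmat y j i := by
  rw [qmat, qmat, norm_sub_rev]

lemma sum_qmat (hN : 1 < N) (y : Fin N → EuclideanSpace ℝ (Fin s)) :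
    ∑ e ∈ ltPairs N, qmat y e.1 e.2 = 1 := by
  simp only [qmat, ← sum_div]
  rw [← Zsum_eq_sum, div_self (Zsum_pos hN y).ne']

lemma qmat_const (v : EuclideanSpace ℝ (Fin s)) (i j : Fin N) :
    qmat (fun _ ↦ v) i j = (#(ltPairs N) : ℝ)⁻¹ := by
  simp [qmat, Zsum_eq_sum]

lemma dist_eq_sqrt_qmat (hN : 1 < N) (y : Fin N → EuclideanSpace ℝ (Fin s)) (i j : Fin N) :
    dist (y i) (y j) = √((qmat y i j * Zsum y)⁻¹ - 1) := by
  rw [qmat, div_mul_cancel₀ _ (Zsum_pos hN y).ne', inv_inv, add_sub_cancel_left,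
    Real.sqrt_sq (norm_nonneg _), dist_eq_norm]

lemma exists_pairwise_dist_eq_of_qmat_eq (hN : 1 < N) {y : Fin N → EuclideanSpace ℝ (Fin s)}
    {c : ℝ} (h : ∀ i j, i < j → qmat y i j = c) :
    ∃ r, Pairwise fun i j ↦ dist (y i) (y j) = r := by
  refine ⟨√((c * Zsum y)⁻¹ - 1), fun i j hij ↦ ?_⟩
  have hc : qmat y i j = c :=
    hij.lt_or_gt.elim (h i j) fun hji ↦ (qmat_comm y i j).trans (h j i hji)
  simp only [dist_eq_sqrt_qmat hN, hc]

end OutputSimilarities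

/-- if `X ⊂ ℝ^d` is an equidistant set of `n > s + 1` points, with arbitrary
positive bandwidths, then every global minimizer of the t-SNE objective `D(P‖Q)` with
`s`-dimensional output has all points `y_1, …, y_n` coinciding. -/
theorem stmt5 (d s n : ℕ) (hn : s + 1 < n)
    (x : Fin n → EuclideanSpace ℝ (Fin d)) (ρ : ℝ) (hρ : 0 < ρ)
    (hx : ∀ i j : Fin n, i ≠ j → ‖x i - x j‖ = ρ)
    (σ : Fin n → ℝ) (hσ : ∀ i, 0 < σ i)
    (y : Fin n → EuclideanSpace ℝ (Fin s))
    (hmin : ∀ y' : Fin n → EuclideanSpace ℝ (Fin s),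
      KLpairs (pmat x σ) (qmat y) ≤ KLpairs (pmat x σ) (qmat y')) :
    ∀ i j : Fin n, y i = y j := by
  have hn1 : 1 < n := by omega
  have hP {i j : Fin n} (hij : i < j) : pmat x σ i j = (#(ltPairs n) : ℝ)⁻¹ :=
    pmat_of_equidistant hx σ hij.ne
  have hP_sum : ∑ e ∈ ltPairs n, pmat x σ e.1 e.2 = 1 := by
    rw [sum_congr rfl fun e he ↦ hP (mem_ltPairs.1 he), sum_const, nsmul_eq_mul,
      mul_inv_cancel₀ (by simpa using (ltPairs_nonempty hn1).ne_empty)]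
  have hKL : KLpairs (pmat x σ) (qmat y) ≤ 0 :=
    (hmin fun _ ↦ 0).trans_eq <| KLpairs_eq_zero_of_eq fun i j hij ↦
      (hP hij).trans (qmat_const 0 i j).symm
  have hQ (i j : Fin n) (hij : i < j) : qmat y i j = (#(ltPairs n) : ℝ)⁻¹ :=
    (eq_of_KLpairs_nonpos (fun _ _ hkl ↦ by rw [hP hkl]; positivity)
      (fun k l _ ↦ qmat_pos hn1 y k l) (hP_sum.trans (sum_qmat hn1 y).symm) hKL
      hij).symm.trans (hP hij)
  obtain ⟨r, hr⟩ := exists_pairwise_dist_eq_of_qmat_eq hn1 hQ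
  exact eq_of_pairwise_dist_eq_of_finrank_lt (by simpa using hn) hr

end
end

section
/- For each n, let Y_n = (y_1, …, y_n) be a tuple of n points in ℝ², let Q_n be the associated t-SNE output distribution on unordered pairs of [n], and let U_n be the uniform distribution on unordered pairs. Let r : ℕ → (0, ∞) satisfy r(n) → 0, and suppose that d_TV(U_n, Q_n)/r(n)³ → 0 as n → ∞. Then for all sufficiently large n there exists an open ball in ℝ² of radius r(n) containing at least (1 − r(n))·n of the points y_1, …, y_n. -/
open Filter Finset
open scoped Classical

noncomputable section

/-- Total variation distance between the uniform distribution on unordered pairs of `[n]`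
and the t-SNE output distribution `Q` of `y : Fin n → ℝ²`. -/
def dTVtoUnif {n : ℕ} (y : Fin n → EuclideanSpace ℝ (Fin 2)) : ℝ :=
  (1 / 2) * ∑ i, ∑ j, if i < j then
    |1 / ((n : ℝ) * ((n : ℝ) - 1) / 2) - qmat y i j| else 0

/-!
Let `T` be the reciprocal of the mean similarity, so that the probability of the pair `{i, j}`
is the uniform one times `T / (1 + ‖y_i - y_j‖²)`. If the output distribution is close to
uniform, then few pairs deviate much from it, so by Turán's theorem some `s + 2` of the points
in `ℝˢ` span no deviating pair: all their mutual squared distances are nearly `T - 1`. Since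
`ℝˢ` contains no `s + 2` points that are pairwise at the same positive distance, `T - 1` must be
small. But then every pair at distance at least `r` deviates, and a point that lies in few
deviating pairs is the centre sought.
-/

theorem abs_sub_le_of_abs_one_sub_div_le {d T ε : ℝ} (hd : 0 ≤ d) (hε : ε ≤ 1 / 2)
    (h : |1 - T / (1 + d)| ≤ ε) : |d - (T - 1)| ≤ 2 * ε * T := by
  have hd_pos : 0 < 1 + d := by linarith
  have hε_nonneg : 0 ≤ ε := (abs_nonneg _).trans h
  have hrel : |d - (T - 1)| ≤ ε * (1 + d) := by
    calc
      |d - (T - 1)| = |1 - T / (1 + d)| * (1 + d) := by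
        rw [← abs_of_pos hd_pos, ← abs_mul, abs_of_pos hd_pos]
        congr 1
        field_simp
        ring
      _ ≤ ε * (1 + d) := by gcongr
  have hdT : 1 + d ≤ 2 * T := by nlinarith [le_abs_self (d - (T - 1))]
  calc
    |d - (T - 1)| ≤ ε * (1 + d) := hrel
    _ ≤ ε * (2 * T) := by gcongr
    _ = 2 * ε * T := by ring

section AffineDependence

variable {V P ι : Type*} [NormedAddCommGroup V] [InnerProductSpace ℝ V] [MetricSpace P]
  [NormedAddTorsor V P] {p : ι → P}

theorem nontrivial_of_not_affineIndependent (hp : ¬AffineIndependent ℝ p) : Nontrivial ι :=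
  not_subsingleton_iff_nontrivial.1 fun _ ↦ hp (affineIndependent_of_subsingleton ℝ p)

variable [Fintype ι]

theorem exists_sum_mul_sq_dist_eq_zero_of_not_affineIndependent (hp : ¬AffineIndependent ℝ p) :
    ∃ w : ι → ℝ, ∑ i, w i = 0 ∧ 0 < ∑ i, w i ^ 2 ∧
      ∑ i, ∑ j, w i * w j * dist (p i) (p j) ^ 2 = 0 := by
  rw [affineIndependent_iff_of_fintype] at hp
  push Not at hp
  obtain ⟨w, hw, hwp, i, hi⟩ := hp
  refine ⟨w, hw, sum_pos' (fun j _ ↦ sq_nonneg (w j)) ⟨i, mem_univ i, by positivity⟩, ?_⟩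
  have hinner := EuclideanGeometry.inner_weightedVSub p hw p hw
  rw [hwp, inner_zero_left] at hinner
  simp only [sq]
  linarith

theorem le_card_mul_of_not_affineIndependent (hp : ¬AffineIndependent ℝ p) {A e : ℝ}
    (h : Pairwise fun i j ↦ |dist (p i) (p j) ^ 2 - A| ≤ e) : A ≤ Fintype.card ι * e := by
  have := nontrivial_of_not_affineIndependent hp
  obtain ⟨a, b, hab⟩ := exists_pair_ne ι
  have he : 0 ≤ e := (abs_nonneg _).trans (h hab)
  obtain ⟨w, hw, hw_pos, hw_dist⟩ := exists_sum_mul_sq_dist_eq_zero_of_not_affineIndependent hp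
  -- On the diagonal `dist ^ 2 - A` is `-A`; adding `A` back there is what produces `A * ∑ w i ^ 2`.
  have herr : ∀ i j, |dist (p i) (p j) ^ 2 - A + if i = j then A else 0| ≤ e := by
    intro i j
    by_cases hij : i = j
    · simpa [hij] using he
    · simpa [hij] using h hij
  refine le_of_mul_le_mul_right ?_ hw_pos
  calc
    A * ∑ i, w i ^ 2
      = ∑ i, ∑ j, w i * w j * (dist (p i) (p j) ^ 2 - A + if i = j then A else 0) := by
        simp only [mul_add, mul_sub, sum_add_distrib, sum_sub_distrib, hw_dist, mul_ite, mul_zero,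
          sum_ite_eq, mem_univ, if_true, ← sum_mul, ← mul_sum, hw, zero_mul, sub_zero, zero_add]
        rw [mul_comm]
        simp only [sq]
    _ ≤ ∑ i, ∑ j, |w i| * |w j| * e := by
        refine sum_le_sum fun i _ ↦ sum_le_sum fun j _ ↦ (le_abs_self _).trans ?_
        rw [abs_mul, abs_mul]
        gcongr
        exact herr i j
    _ = (∑ i, |w i|) ^ 2 * e := by simp only [sq, sum_mul_sum, ← sum_mul]
    _ ≤ (Fintype.card ι * ∑ i, |w i| ^ 2) * e := by
        gcongr
        exact sq_sum_le_card_mul_sum_sq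
    _ = Fintype.card ι * e * ∑ i, w i ^ 2 := by
        simp only [sq_abs]
        ring

theorem sub_one_le_of_not_affineIndependent (hp : ¬AffineIndependent ℝ p) {T ε : ℝ}
    (hε : 4 * Fintype.card ι * ε ≤ 1)
    (h : Pairwise fun i j ↦ |1 - T / (1 + dist (p i) (p j) ^ 2)| ≤ ε) :
    T - 1 ≤ 4 * Fintype.card ι * ε := by
  have := nontrivial_of_not_affineIndependent hp
  obtain ⟨a, b, hab⟩ := exists_pair_ne ι
  have hε_nonneg : 0 ≤ ε := (abs_nonneg _).trans (h hab)
  have hcard : (1 : ℝ) ≤ Fintype.card ι := by exact_mod_cast Fintype.card_pos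
  have hε_half : ε ≤ 1 / 2 := by nlinarith
  have hle : T - 1 ≤ Fintype.card ι * (2 * ε * T) :=
    le_card_mul_of_not_affineIndependent hp fun i j hij ↦
      abs_sub_le_of_abs_one_sub_div_le (sq_nonneg _) hε_half (h hij)
  have hT : T ≤ 2 := by nlinarith
  have hcard_mul : 0 ≤ Fintype.card ι * ε := by positivity
  nlinarith [mul_le_mul_of_nonneg_left hT hcard_mul]

end AffineDependence

section Graph

variable {V : Type*} [Fintype V] (G : SimpleGraph V) [DecidableRel G.Adj]

theorem choose_two_card_le_card_edgeFinset_add_compl :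
    (Fintype.card V).choose 2 ≤ #G.edgeFinset + #Gᶜ.edgeFinset := by
  rw [← SimpleGraph.card_edgeFinset_top_eq_card_choose_two]
  refine le_trans (card_le_card fun e he ↦ ?_) (card_union_le _ _)
  induction e with
  | _ u v =>
    simp only [SimpleGraph.mem_edgeFinset, SimpleGraph.mem_edgeSet, SimpleGraph.top_adj,
      mem_union, SimpleGraph.compl_adj] at he ⊢
    tauto

theorem exists_isNIndepSet_of_card_edgeFinset_lt {k : ℕ} (hk : 2 * k ≤ Fintype.card V)
    (hG : 4 * k * #G.edgeFinset < Fintype.card V ^ 2) : ∃ t, G.IsNIndepSet (k + 1) t := by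
  by_contra! hfree
  have hturan : 2 * k * #Gᶜ.edgeFinset ≤ (k - 1) * Fintype.card V ^ 2 := by
    refine le_trans ?_ SimpleGraph.mul_card_edgeFinset_turanGraph_le
    rw [SimpleGraph.card_edgeFinset_turanGraph]
    gcongr
    exact ((SimpleGraph.cliqueFree_compl _).2 hfree).card_edgeFinset_le
  have htotal := choose_two_card_le_card_edgeFinset_add_compl G
  rcases k.eq_zero_or_pos with rfl | hk_pos
  · have : Nonempty V := Fintype.card_pos_iff.1 (Nat.pos_of_ne_zero fun h ↦ by simp [h] at hG)
    exact hfree {Classical.arbitrary V} (by simp [SimpleGraph.isNIndepSet_iff])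
  · rify [hk_pos] at hk hG hturan htotal
    rw [Nat.cast_choose_two] at htotal
    have htotal_mul := mul_le_mul_of_nonneg_left htotal (by positivity : (0 : ℝ) ≤ 2 * k)
    have hk_mul := mul_le_mul_of_nonneg_right hk (Nat.cast_nonneg (Fintype.card V))
    linarith

theorem exists_card_mul_degree_le [Nonempty V] :
    ∃ v, Fintype.card V * G.degree v ≤ 2 * #G.edgeFinset := by
  obtain ⟨v, hv⟩ := G.exists_minimal_degree_vertex
  refine ⟨v, ?_⟩
  rw [← G.sum_degrees_eq_twice_card_edges, ← hv, ← card_univ]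
  exact card_nsmul_le_sum _ _ _ fun u _ ↦ G.minDegree_le_degree u

theorem card_sub_degree_le_card_ball {X : Type*} [PseudoMetricSpace X] {y : V → X} {r : ℝ} {u : V}
    (h : ∀ v, r ≤ dist (y u) (y v) → G.Adj u v) :
    (Fintype.card V : ℝ) - G.degree u ≤ #{v | y v ∈ Metric.ball (y u) r} := by
  have hfar : #{v | y v ∉ Metric.ball (y u) r} ≤ G.degree u := by
    rw [← SimpleGraph.card_neighborFinset_eq_degree]
    refine card_le_card fun v hv ↦ ?_
    simp only [mem_filter_univ, Metric.mem_ball', not_lt] at hv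
    exact (SimpleGraph.mem_neighborFinset _ _ _).2 (h v hv)
  have hsplit := card_filter_add_card_filter_not (s := (univ : Finset V))
    (fun v ↦ y v ∈ Metric.ball (y u) r)
  rw [card_univ] at hsplit
  rw [sub_le_iff_le_add]
  exact_mod_cast hsplit.ge.trans (by gcongr)

theorem mul_card_edgeFinset_le_sum_ite_lt [LinearOrder V] {f : V → V → ℝ} {c : ℝ}
    (hf : ∀ u v, u < v → 0 ≤ f u v) (hc : ∀ u v, G.Adj u v → c ≤ f u v) :
    c * #G.edgeFinset ≤ ∑ u, ∑ v, if u < v then f u v else 0 := by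
  have hinj : Set.InjOn (fun e : Sym2 V ↦ (e.inf, e.sup)) G.edgeFinset :=
    fun _ _ _ _ h ↦ Sym2.sortEquiv.injective (Subtype.ext h)
  calc
    c * #G.edgeFinset = ∑ _e ∈ G.edgeFinset, c := by simp [mul_comm]
    _ ≤ ∑ e ∈ G.edgeFinset, if e.inf < e.sup then f e.inf e.sup else 0 := by
        refine sum_le_sum (Sym2.ind fun u v huv ↦ ?_)
        have hadj : G.Adj u v := by simpa using huv
        rcases hadj.ne.lt_or_gt with h | h
        · simpa [h, h.le] using hc u v hadj
        · simpa [h, h.le] using hc v u hadj.symm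
    _ ≤ ∑ q : V × V, if q.1 < q.2 then f q.1 q.2 else 0 := by
        rw [← sum_image (f := fun q : V × V ↦ if q.1 < q.2 then f q.1 q.2 else 0) hinj]
        refine sum_le_univ_sum_of_nonneg fun q ↦ ?_
        split_ifs with hq
        exacts [hf _ _ hq, le_rfl]
    _ = ∑ u, ∑ v, if u < v then f u v else 0 := Fintype.sum_prod_type _

end Graph

section TSNE

variable {n s : ℕ}

/-- Total variation distance between the uniform distribution on unordered pairs of `[n]` and the
t-SNE output distribution of points in `ℝˢ`; for `s = 2` this is `dTVtoUnif`. -/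
def tvDistUniform (y : Fin n → EuclideanSpace ℝ (Fin s)) : ℝ :=
  (1 / 2) * ∑ i, ∑ j, if i < j then
    |1 / ((n : ℝ) * ((n : ℝ) - 1) / 2) - qmat y i j| else 0

/-- The graph of those pairs whose t-SNE output probability differs from the uniform probability
by a relative error larger than `ε`; the points of an independent set are nearly equidistant. -/
def deviationGraph (y : Fin n → EuclideanSpace ℝ (Fin s)) (ε : ℝ) : SimpleGraph (Fin n) where
  Adj i j := i ≠ j ∧ ε < |1 - (n : ℝ) * (n - 1) / 2 * qmat y i j|
  symm := ⟨fun i j h ↦ by simpa only [qmat, norm_sub_rev (y j), ne_comm (a := j)] using h⟩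

/-- The number of pairs divided by the sum of the similarities `(1 + ‖y i - y j‖²)⁻¹` over them,
that is, the reciprocal of the mean similarity; it is `0` when there are no pairs. -/
def invMeanSimilarity (y : Fin n → EuclideanSpace ℝ (Fin s)) : ℝ :=
  n * (n - 1) / 2 / Zsum y

variable (y : Fin n → EuclideanSpace ℝ (Fin s))

theorem mul_qmat_eq_invMeanSimilarity_div (i j : Fin n) :
    n * (n - 1) / 2 * qmat y i j = invMeanSimilarity y / (1 + dist (y i) (y j) ^ 2) := by
  rw [qmat, invMeanSimilarity, dist_eq_norm]
  ring

theorem mul_card_edgeFinset_deviationGraph_le (ε : ℝ) :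
    ε * #(deviationGraph y ε).edgeFinset ≤ n * (n - 1) * tvDistUniform y := by
  set M : ℝ := n * (n - 1) / 2 with hM
  have hM_pos : ∀ i j : Fin n, i ≠ j → 0 < M := by
    intro i j hij
    have hn : (2 : ℝ) ≤ n := by exact_mod_cast Fin.nontrivial_iff_two_le.1 ⟨i, j, hij⟩
    have : (0 : ℝ) < n - 1 := by linarith
    positivity
  calc
    ε * #(deviationGraph y ε).edgeFinset
      ≤ ∑ i, ∑ j, if i < j then M * |1 / M - qmat y i j| else 0 := by
        refine mul_card_edgeFinset_le_sum_ite_lt _ (fun i j hij ↦ ?_) fun i j hij ↦ ?_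
        · exact mul_nonneg (hM_pos i j hij.ne).le (abs_nonneg _)
        · have hpos := hM_pos i j hij.1
          rw [← abs_of_pos hpos, ← abs_mul, abs_of_pos hpos, mul_sub, mul_one_div_cancel hpos.ne']
          exact hij.2.le
    _ = n * (n - 1) * tvDistUniform y := by
        simp only [tvDistUniform, ← hM, ← mul_ite_zero, ← mul_sum]
        rw [hM]
        ring

variable {y} {ε : ℝ}

theorem invMeanSimilarity_sub_one_le_of_isNIndepSet {t : Finset (Fin n)}
    (hε : 4 * ((s : ℝ) + 2) * ε ≤ 1) (ht : (deviationGraph y ε).IsNIndepSet (s + 2) t) :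
    invMeanSimilarity y - 1 ≤ 4 * ((s : ℝ) + 2) * ε := by
  have hcard : Fintype.card t = s + 2 := by rw [Fintype.card_coe, ht.card_eq]
  have hdep : ¬AffineIndependent ℝ fun i : t ↦ y i := by
    intro hind
    have := hind.card_le_finrank_succ.trans (Nat.succ_le_succ (Submodule.finrank_le _))
    simp [hcard] at this
  have hcard' : (Fintype.card t : ℝ) = s + 2 := by simp [hcard]
  rw [← hcard'] at hε ⊢
  refine sub_one_le_of_not_affineIndependent hdep hε fun i j hij ↦ ?_
  have hne : (i : Fin n) ≠ j := Subtype.coe_injective.ne hij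
  dsimp only
  rw [← mul_qmat_eq_invMeanSimilarity_div]
  exact not_lt.1 fun hlt ↦ ht.isIndepSet i.2 j.2 hne ⟨hne, hlt⟩

theorem deviationGraph_adj_of_le_dist {r : ℝ} (hr : 0 < r) (hr1 : r ≤ 1) (hε : ε < r ^ 2 / 4)
    (hy : invMeanSimilarity y - 1 ≤ r ^ 2 / 2) {i j : Fin n} (hij : r ≤ dist (y i) (y j)) :
    (deviationGraph y ε).Adj i j := by
  refine ⟨fun h ↦ ?_, lt_of_lt_of_le ?_ (le_abs_self _)⟩
  · rw [h, dist_self] at hij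
    linarith
  have hd : r ^ 2 ≤ dist (y i) (y j) ^ 2 := by gcongr
  have hr_sq : r ^ 2 ≤ 1 := pow_le_one₀ hr.le hr1
  have hle : invMeanSimilarity y / (1 + dist (y i) (y j) ^ 2) ≤ 1 - r ^ 2 / 4 := by
    rw [div_le_iff₀ (by positivity)]
    nlinarith
  rw [mul_qmat_eq_invMeanSimilarity_div]
  linarith

theorem card_edgeFinset_deviationGraph_le {r : ℝ} (hr : 0 < r)
    (htv : tvDistUniform y ≤ r ^ 3 / (64 * ((s : ℝ) + 2) ^ 2)) :
    8 * ((s : ℝ) + 2) * #(deviationGraph y (r ^ 2 / (8 * (s + 2)))).edgeFinset ≤ r * n ^ 2 := by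
  set E : ℝ := (#(deviationGraph y (r ^ 2 / (8 * (s + 2)))).edgeFinset : ℝ)
  have hn : (0 : ℝ) ≤ n * (n - 1) := by
    rcases n.eq_zero_or_pos with rfl | hn
    · simp
    · have : (1 : ℝ) ≤ n := by exact_mod_cast hn
      nlinarith
  have hmarkov : r ^ 2 / (8 * (s + 2)) * E ≤ n ^ 2 * (r ^ 3 / (64 * ((s : ℝ) + 2) ^ 2)) := by
    calc
      r ^ 2 / (8 * (s + 2)) * E ≤ n * (n - 1) * tvDistUniform y :=
        mul_card_edgeFinset_deviationGraph_le y _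
      _ ≤ n * (n - 1) * (r ^ 3 / (64 * ((s : ℝ) + 2) ^ 2)) := by gcongr
      _ ≤ n ^ 2 * (r ^ 3 / (64 * ((s : ℝ) + 2) ^ 2)) := by
        gcongr
        linarith [(Nat.cast_nonneg n : (0 : ℝ) ≤ n)]
  field_simp at hmarkov
  linarith

theorem exists_le_card_ball (hn : 2 * (s + 1) ≤ n) {r : ℝ} (hr : 0 < r) (hr1 : r ≤ 1)
    (htv : tvDistUniform y ≤ r ^ 3 / (64 * ((s : ℝ) + 2) ^ 2)) :
    ∃ i, (1 - r) * n ≤ #{j | y j ∈ Metric.ball (y i) r} := by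
  set G := deviationGraph y (r ^ 2 / (8 * (s + 2)))
  have hn_pos : (0 : ℝ) < n := by exact_mod_cast (by lia : 0 < n)
  have : Nonempty (Fin n) := ⟨⟨0, by lia⟩⟩
  have hr_sq : r ^ 2 ≤ 1 := pow_le_one₀ hr.le hr1
  have hedges : 8 * ((s : ℝ) + 2) * #G.edgeFinset ≤ r * n ^ 2 :=
    card_edgeFinset_deviationGraph_le hr htv
  obtain ⟨t, ht⟩ : ∃ t, G.IsNIndepSet (s + 2) t := by
    refine exists_isNIndepSet_of_card_edgeFinset_lt G (by simpa using hn) ?_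
    rw [Fintype.card_fin]
    rify
    nlinarith
  have hε : 4 * ((s : ℝ) + 2) * (r ^ 2 / (8 * (s + 2))) = r ^ 2 / 2 := by field_simp; norm_num
  have hy : invMeanSimilarity y - 1 ≤ r ^ 2 / 2 :=
    hε ▸ invMeanSimilarity_sub_one_le_of_isNIndepSet (by linarith) ht
  have hfar : ∀ i j, r ≤ dist (y i) (y j) → G.Adj i j := fun i j ↦
    deviationGraph_adj_of_le_dist hr hr1 (by gcongr; linarith) hy
  obtain ⟨i, hi⟩ := exists_card_mul_degree_le G
  have hdeg : (G.degree i : ℝ) ≤ r * n := by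
    rw [Fintype.card_fin] at hi
    rify at hi
    refine le_of_mul_le_mul_left ?_ hn_pos
    nlinarith
  have hball := card_sub_degree_le_card_ball G (hfar i)
  rw [Fintype.card_fin] at hball
  exact ⟨i, by linarith⟩

theorem stmt8_general (y : (n : ℕ) → Fin n → EuclideanSpace ℝ (Fin s)) (r : ℕ → ℝ)
    (hr : ∀ n, 0 < r n)
    (htv : Tendsto (fun n => tvDistUniform (y n) / r n ^ 3) atTop (nhds 0)) :
    ∀ᶠ n in atTop, ∃ c : EuclideanSpace ℝ (Fin s),
      (1 - r n) * n ≤ #{i | y n i ∈ Metric.ball c (r n)} := by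
  have hconst : (0 : ℝ) < 1 / (64 * ((s : ℝ) + 2) ^ 2) := by positivity
  filter_upwards [htv.eventually_le_const hconst, eventually_ge_atTop (2 * (s + 1))] with n hn_tv hn
  rcases le_total (r n) 1 with hr1 | hr1
  · rw [div_le_iff₀ (pow_pos (hr n) 3), one_div_mul_eq_div] at hn_tv
    obtain ⟨i, hi⟩ := exists_le_card_ball hn (hr n) hr1 hn_tv
    exact ⟨y n i, hi⟩
  · exact ⟨0, (mul_nonpos_of_nonpos_of_nonneg (by linarith) n.cast_nonneg).trans
      (Nat.cast_nonneg _)⟩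

end TSNE

/-- if `r(n) → 0` and `d_TV(U_n, Q_n)/r(n)³ → 0`, then for all sufficiently
large `n` there is an open ball of radius `r(n)` in `ℝ²` containing at least `(1 - r(n))·n`
of the points `y_1, …, y_n`. -/
theorem stmt8 (y : (n : ℕ) → Fin n → EuclideanSpace ℝ (Fin 2))
    (r : ℕ → ℝ) (hr : ∀ n, 0 < r n) (hr0 : Tendsto r atTop (nhds 0))
    (htv : Tendsto (fun n => dTVtoUnif (y n) / r n ^ 3) atTop (nhds 0)) :
    ∀ᶠ n in atTop, ∃ c : EuclideanSpace ℝ (Fin 2),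
      (1 - r n) * n ≤
        (Finset.univ.filter (fun i : Fin n => y n i ∈ Metric.ball c (r n))).card := by
  exact stmt8_general y r hr htv

end
end

section
/- Let a > 0 and 0 < ε ≤ 0.17. Let p, q ∈ ℝ² satisfy (1−ε)a ≤ ‖p − q‖ ≤ (1+ε)a. Suppose u, v ∈ ℝ² each lie in the intersection of the two closed annuli centered at p and at q with inner radius (1−ε)a and outer radius (1+ε)a; that is, (1−ε)a ≤ ‖u−p‖ ≤ (1+ε)a, (1−ε)a ≤ ‖u−q‖ ≤ (1+ε)a, and likewise for v. Then ‖u − v‖ ∉ [(1−ε)a, (1+ε)a]. -/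
/-!
Points `pᵢ` that are affinely dependent satisfy `∑ wᵢ pᵢ = 0` for some weights `w ≠ 0` of sum zero,
and then `∑ᵢⱼ wᵢ wⱼ dist(pᵢ, pⱼ)² = -2 ‖∑ wᵢ pᵢ‖² = 0`. Bounding `dist²` above by `R²` where
`wᵢ wⱼ > 0` and below by `r²` where `wᵢ wⱼ < 0`, and using `(∑ |wᵢ|)² ≤ n ∑ wᵢ²`, one gets
`n r² ≤ (n - 2) R²`. Four points of a plane are affinely dependent, so `√2 r ≤ R`; but
`1 + ε < √2 (1 - ε)` for `ε ≤ 0.17`.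
-/

open Finset

theorem mul_le_abs_add_of_mem_Icc {m M t : ℝ} (ht : t ∈ Set.Icc m M) (s : ℝ) :
    s * t ≤ (M - m) / 2 * |s| + (M + m) / 2 * s := by
  rcases le_total 0 s with hs | hs
  · rw [abs_of_nonneg hs]
    linarith [mul_le_mul_of_nonneg_left ht.2 hs]
  · rw [abs_of_nonpos hs]
    linarith [mul_le_mul_of_nonpos_left ht.1 hs]

section QuadraticForm

variable {ι : Type*} [Fintype ι] {D : ι → ι → ℝ} {m M : ℝ}

theorem sum_sum_mul_mul_le (hdiag : ∀ i, D i i ≤ 0)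
    (hoff : Pairwise fun i j ↦ D i j ∈ Set.Icc m M) (w : ι → ℝ) :
    ∑ i, ∑ j, w i * w j * D i j ≤
      (M - m) / 2 * (∑ i, |w i|) ^ 2 + (M + m) / 2 * (∑ i, w i) ^ 2 - M * ∑ i, w i ^ 2 := by
  classical
  have hterm (i j : ι) : w i * w j * D i j ≤
      (M - m) / 2 * (|w i| * |w j|) + (M + m) / 2 * (w i * w j)
        - if i = j then M * w i ^ 2 else 0 := by
    rcases eq_or_ne i j with rfl | hij
    · rw [if_pos rfl, abs_mul_abs_self]
      linarith [mul_nonpos_of_nonneg_of_nonpos (mul_self_nonneg (w i)) (hdiag i)]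
    · rw [if_neg hij, sub_zero, ← abs_mul]
      exact mul_le_abs_add_of_mem_Icc (hoff hij) _
  calc ∑ i, ∑ j, w i * w j * D i j
      ≤ ∑ i, ∑ j, ((M - m) / 2 * (|w i| * |w j|) + (M + m) / 2 * (w i * w j)
          - if i = j then M * w i ^ 2 else 0) :=
        sum_le_sum fun i _ ↦ sum_le_sum fun j _ ↦ hterm i j
    _ = (M - m) / 2 * (∑ i, |w i|) ^ 2 + (M + m) / 2 * (∑ i, w i) ^ 2 - M * ∑ i, w i ^ 2 := by
        simp only [sq, sum_mul_sum, sum_sub_distrib, sum_add_distrib, sum_ite_eq, mem_univ,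
          if_true]
        simp only [mul_sum]

theorem card_mul_le_of_sum_sum_mul_mul_nonneg (hM : 0 ≤ M) (hdiag : ∀ i, D i i ≤ 0)
    (hoff : Pairwise fun i j ↦ D i j ∈ Set.Icc m M) {w : ι → ℝ} (hw : w ≠ 0)
    (hsum : ∑ i, w i = 0) (hD : 0 ≤ ∑ i, ∑ j, w i * w j * D i j) :
    Fintype.card ι * m ≤ (Fintype.card ι - 2) * M := by
  set n : ℝ := (Fintype.card ι : ℝ)
  set A : ℝ := ∑ i, |w i|
  set S : ℝ := ∑ i, w i ^ 2
  have hA : 0 < A := by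
    obtain ⟨i, hi⟩ := Function.ne_iff.mp hw
    exact sum_pos' (fun j _ ↦ abs_nonneg _) ⟨i, mem_univ i, abs_pos.mpr hi⟩
  have hCauchy : A ^ 2 ≤ n * S := by
    simpa only [sq_abs, card_univ] using sq_sum_le_card_mul_sum_sq (s := univ) (f := fun i ↦ |w i|)
  have hform : M * S ≤ (M - m) / 2 * A ^ 2 := by
    have h := hD.trans (sum_sum_mul_mul_le hdiag hoff w)
    rw [hsum] at h
    linarith
  have hscaled : M * A ^ 2 ≤ n * ((M - m) / 2) * A ^ 2 := by
    calc M * A ^ 2 ≤ M * (n * S) := by gcongr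
      _ = n * (M * S) := by ring
      _ ≤ n * ((M - m) / 2 * A ^ 2) := by gcongr
      _ = n * ((M - m) / 2) * A ^ 2 := by ring
  linarith [le_of_mul_le_mul_right hscaled (pow_pos hA 2)]

end QuadraticForm

section Coplanar

variable {k V P : Type*} [DivisionRing k] [AddCommGroup V] [Module k V] [AddTorsor V P]

theorem coplanar_iff_not_affineIndependent {p : Fin 4 → P} :
    Coplanar k (Set.range p) ↔ ¬AffineIndependent k p := by
  rw [coplanar_iff_finrank_le_two,
    finrank_vectorSpan_le_iff_not_affineIndependent k p (Fintype.card_fin 4)]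

theorem coplanar_iff_not_affineIndependent_set {p₁ p₂ p₃ p₄ : P} :
    Coplanar k {p₁, p₂, p₃, p₄} ↔ ¬AffineIndependent k ![p₁, p₂, p₃, p₄] := by
  rw [← coplanar_iff_not_affineIndependent]
  simp only [Matrix.range_cons, Matrix.range_empty, Set.union_empty, Set.singleton_union]

end Coplanar

section Metric

variable {V P : Type*} [NormedAddCommGroup V] [InnerProductSpace ℝ V] [MetricSpace P]
  [NormedAddTorsor V P]

theorem sum_sum_mul_mul_dist_sq_eq_zero {ι : Type*} {s : Finset ι} {w : ι → ℝ} {p : ι → P}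
    (hsum : ∑ i ∈ s, w i = 0) (hw : s.weightedVSub p w = (0 : V)) :
    ∑ i ∈ s, ∑ j ∈ s, w i * w j * dist (p i) (p j) ^ 2 = 0 := by
  have h := EuclideanGeometry.inner_weightedVSub (V := V) p hsum p hsum
  rw [hw, inner_zero_left] at h
  simp only [sq]
  linarith

theorem card_mul_sq_le_of_not_affineIndependent {ι : Type*} [Fintype ι] {p : ι → P} {r R : ℝ}
    (hp : ¬AffineIndependent ℝ p) (hr : 0 ≤ r)
    (hdist : Pairwise fun i j ↦ dist (p i) (p j) ∈ Set.Icc r R) :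
    Fintype.card ι * r ^ 2 ≤ (Fintype.card ι - 2) * R ^ 2 := by
  rw [affineIndependent_iff_of_fintype] at hp
  push Not at hp
  obtain ⟨w, hsum, hw, i, hi⟩ := hp
  refine card_mul_le_of_sum_sum_mul_mul_nonneg (D := fun i j ↦ dist (p i) (p j) ^ 2)
    (sq_nonneg R) (fun i ↦ by simp) (fun i j hij ↦ ?_) (Function.ne_iff.mpr ⟨i, hi⟩) hsum
    (sum_sum_mul_mul_dist_sq_eq_zero hsum hw).ge
  obtain ⟨hlower, hupper⟩ := hdist hij
  exact ⟨by gcongr, by gcongr⟩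

theorem sqrt_two_mul_le_of_not_affineIndependent {p : Fin 4 → P} {r R : ℝ}
    (hp : ¬AffineIndependent ℝ p)
    (hdist : Pairwise fun i j ↦ dist (p i) (p j) ∈ Set.Icc r R) : √2 * r ≤ R := by
  have hR : 0 ≤ R := dist_nonneg.trans (hdist zero_ne_one).2
  rcases le_total r 0 with hr | hr
  · exact (mul_nonpos_of_nonneg_of_nonpos (Real.sqrt_nonneg 2) hr).trans hR
  have hfour : 4 * r ^ 2 ≤ (4 - 2) * R ^ 2 := by
    simpa only [Fintype.card_fin, Nat.cast_ofNat] using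
      card_mul_sq_le_of_not_affineIndependent hp hr hdist
  refine le_of_sq_le_sq ?_ hR
  rw [mul_pow, Real.sq_sqrt zero_le_two]
  linarith

theorem stmt9_general {r R : ℝ} (hR : R < √2 * r) {p q u v : P}
    (hplane : Coplanar ℝ {p, q, u, v}) (hpq : dist p q ∈ Set.Icc r R)
    (hup : dist u p ∈ Set.Icc r R) (huq : dist u q ∈ Set.Icc r R)
    (hvp : dist v p ∈ Set.Icc r R) (hvq : dist v q ∈ Set.Icc r R) :
    dist u v ∉ Set.Icc r R := by
  intro huv
  rw [dist_comm] at hup huq hvp hvq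
  let f : Fin 4 → P := ![p, q, u, v]
  have : Std.Symm fun i j ↦ dist (f i) (f j) ∈ Set.Icc r R :=
    ⟨fun i j h ↦ by rwa [dist_comm]⟩
  have hdist : Pairwise fun i j ↦ dist (f i) (f j) ∈ Set.Icc r R := by
    refine Pairwise.of_lt ?_
    simp [f, Fin.forall_fin_succ, -Set.mem_Icc, *]
  have hdep : ¬AffineIndependent ℝ f := coplanar_iff_not_affineIndependent_set.mp hplane
  exact hR.not_ge (sqrt_two_mul_le_of_not_affineIndependent hdep hdist)

end Metric

theorem one_add_mul_lt_sqrt_two_mul_one_sub_mul {a ε : ℝ} (ha : 0 < a) (hε : ε ≤ 0.17) :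
    (1 + ε) * a < √2 * ((1 - ε) * a) := by
  have hsqrt : 1.41 < √2 := Real.lt_sqrt_of_sq_lt (by norm_num)
  have hpos : 0 < (1 - ε) * a := mul_pos (by linarith) ha
  calc (1 + ε) * a < 1.41 * (1 - ε) * a := by gcongr; linarith
    _ = 1.41 * ((1 - ε) * a) := mul_assoc _ _ _
    _ < √2 * ((1 - ε) * a) := by gcongr

/-- if `p, q ∈ ℝ²` are at distance in `[(1-ε)a, (1+ε)a]` with `0 < ε ≤ 0.17`,
and `u, v` each lie in the intersection of the closed annuli centered at `p` and at `q` with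
inner radius `(1-ε)a` and outer radius `(1+ε)a`, then `‖u - v‖ ∉ [(1-ε)a, (1+ε)a]`. -/
theorem stmt9 (a ε : ℝ) (ha : 0 < a) (hε : 0 < ε) (hε' : ε ≤ 0.17)
    (p q u v : EuclideanSpace ℝ (Fin 2))
    (hpq₁ : (1 - ε) * a ≤ ‖p - q‖) (hpq₂ : ‖p - q‖ ≤ (1 + ε) * a)
    (hup₁ : (1 - ε) * a ≤ ‖u - p‖) (hup₂ : ‖u - p‖ ≤ (1 + ε) * a)
    (huq₁ : (1 - ε) * a ≤ ‖u - q‖) (huq₂ : ‖u - q‖ ≤ (1 + ε) * a)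
    (hvp₁ : (1 - ε) * a ≤ ‖v - p‖) (hvp₂ : ‖v - p‖ ≤ (1 + ε) * a)
    (hvq₁ : (1 - ε) * a ≤ ‖v - q‖) (hvq₂ : ‖v - q‖ ≤ (1 + ε) * a) :
    ‖u - v‖ ∉ Set.Icc ((1 - ε) * a) ((1 + ε) * a) := by
  simp only [← dist_eq_norm] at *
  exact stmt9_general (one_add_mul_lt_sqrt_two_mul_one_sub_mul ha hε')
    (coplanar_of_finrank_eq_two _ finrank_euclideanSpace_fin)
    ⟨hpq₁, hpq₂⟩ ⟨hup₁, hup₂⟩ ⟨huq₁, huq₂⟩ ⟨hvp₁, hvp₂⟩ ⟨hvq₁, hvq₂⟩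
end

section
/- Fix σ > 0 and δ ∈ (0, 1/2). There exist constants c > 0, c' > 0, C > 0 such that the following holds for all sufficiently large d. Set n = ⌈e^{c·d^{2δ}}⌉ and let x_1, …, x_n be independent uniform random points on the unit sphere S^{d−1} ⊂ ℝ^d; form the t-SNE pair probabilities p_{ij} using all bandwidths equal to σ. Then with probability at least 1 − e^{−c'·d^{2δ}}, every unordered pair {i,j} satisfies |C(n,2)·p_{ij} − 1| ≤ C·d^{−1/2+δ}. -/
open MeasureTheory Filter Finset

noncomputable section

/-!
Independent points of `S^{d-1}` are nearly orthogonal: the cone over the cap `{u | t ≤ ⟪u, v⟫}` lies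
in a ball of radius `exp (-t ^ 2 / 2)`, so the cap has measure at most `exp (-d * t ^ 2 / 2)`. For
`t = d ^ (-1 / 2 + δ)` this is `exp (-d ^ (2 * δ) / 2)`, which survives a union bound over
exponentially (in `d ^ (2 * δ)`) many pairs. On the complementary event all exponents
`-‖x i - x k‖ ^ 2 / (2 * σ i ^ 2)` with fixed `i` agree up to `O(t)`, hence each `p_{j|i}` is
`(1 + O(t)) / (n - 1)`.
-/

section SphericalCap

variable {E : Type*} [NormedAddCommGroup E] [InnerProductSpace ℝ E]

/- The obvious centre `t • v` gives the radius `√(1 - t ^ 2)`, but only for `t ^ 2 ≤ 1 / 2`;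
shrinking it by the factor `1 - t ^ 2 / 2` covers all `t`. -/
lemma norm_smul_sub_smul_le_of_le_inner {u v : E} (hu : ‖u‖ = 1) (hv : ‖v‖ = 1) {t : ℝ}
    (ht : 0 ≤ t) (huv : t ≤ inner ℝ u v) {r : ℝ} (hr₀ : 0 ≤ r) (hr₁ : r ≤ 1) :
    ‖r • u - (t * (1 - t ^ 2 / 2)) • v‖ ≤ 1 - t ^ 2 / 2 := by
  have ht₁ : t ≤ 1 := huv.trans <| by simpa [hu, hv] using real_inner_le_norm u v
  have ht_sq : t ^ 2 ≤ 1 := pow_le_one₀ ht ht₁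
  set a := 1 - t ^ 2 / 2 with ha
  have ha₀ : 0 ≤ a := by linarith
  have h_center : (t * a) ^ 2 ≤ a ^ 2 := by
    rw [mul_pow]
    exact mul_le_of_le_one_left (sq_nonneg a) ht_sq
  have h_boundary : 1 - 2 * (t * a) * t + (t * a) ^ 2 ≤ a ^ 2 := by
    have h_factor : a ^ 2 - (1 - 2 * (t * a) * t + (t * a) ^ 2) = (1 - a) ^ 2 * (2 * a - 1) := by
      rw [ha]
      ring
    rw [← sub_nonneg, h_factor]
    exact mul_nonneg (sq_nonneg _) (by linarith)
  -- The squared distance is convex in `r`, so only `r = 0` and `r = 1` matter.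
  refine le_of_sq_le_sq ?_ ha₀
  calc ‖r • u - (t * a) • v‖ ^ 2
      = r ^ 2 - 2 * r * (t * a) * inner ℝ u v + (t * a) ^ 2 := by
        rw [norm_sub_sq_real, norm_smul, norm_smul, hu, hv, real_inner_smul_left,
          real_inner_smul_right, mul_one, mul_one, Real.norm_eq_abs, Real.norm_eq_abs, sq_abs,
          sq_abs]
        ring
    _ ≤ r - 2 * r * (t * a) * t + (t * a) ^ 2 := by
        gcongr
        exact pow_le_of_le_one hr₀ hr₁ two_ne_zero
    _ = (1 - r) * (t * a) ^ 2 + r * (1 - 2 * (t * a) * t + (t * a) ^ 2) := by ring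
    _ ≤ (1 - r) * a ^ 2 + r * a ^ 2 := by
        have := sub_nonneg.2 hr₁
        gcongr
    _ = a ^ 2 := by ring

open scoped Pointwise in
lemma Ioo_smul_cap_subset_closedBall (v : Metric.sphere (0 : E) 1) {t : ℝ} (ht : 0 ≤ t) :
    Set.Ioo (0 : ℝ) 1 •
        (Subtype.val '' {u : Metric.sphere (0 : E) 1 | t ≤ inner ℝ (u : E) (v : E)}) ⊆
      Metric.closedBall ((t * (1 - t ^ 2 / 2)) • (v : E)) (Real.exp (-(t ^ 2 / 2))) := by
  rintro _ ⟨r, ⟨hr₀, hr₁⟩, _, ⟨u, hu, rfl⟩, rfl⟩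
  rw [mem_closedBall_iff_norm]
  exact (norm_smul_sub_smul_le_of_le_inner (norm_eq_of_mem_sphere u) (norm_eq_of_mem_sphere v)
    ht hu hr₀.le hr₁.le).trans (Real.one_sub_le_exp_neg _)

variable [FiniteDimensional ℝ E] [MeasurableSpace E] [BorelSpace E]
  (μ : Measure E) [μ.IsAddHaarMeasure]

lemma toSphere_cap_le (v : Metric.sphere (0 : E) 1) {t : ℝ} (ht : 0 ≤ t) :
    μ.toSphere {u | t ≤ inner ℝ (u : E) (v : E)} ≤
      ENNReal.ofReal (Real.exp (-(Module.finrank ℝ E * t ^ 2 / 2))) * μ.toSphere Set.univ := by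
  have h_meas : MeasurableSet {u : Metric.sphere (0 : E) 1 | t ≤ inner ℝ (u : E) (v : E)} :=
    (isClosed_le continuous_const (by fun_prop)).measurableSet
  have h_exp : Real.exp (-(t ^ 2 / 2)) ^ Module.finrank ℝ E =
      Real.exp (-(Module.finrank ℝ E * t ^ 2 / 2)) := by
    rw [← Real.exp_nat_mul]
    ring_nf
  rw [Measure.toSphere_apply' _ h_meas, Measure.toSphere_apply_univ, mul_left_comm]
  gcongr
  refine (measure_mono (Ioo_smul_cap_subset_closedBall v ht)).trans_eq ?_
  rw [Measure.addHaar_closedBall _ _ (Real.exp_pos _).le, h_exp]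

lemma toSphere_lt_abs_inner_le (v : Metric.sphere (0 : E) 1) {t : ℝ} (ht : 0 ≤ t) :
    μ.toSphere {u | t < |inner ℝ (u : E) (v : E)|} ≤
      2 * ENNReal.ofReal (Real.exp (-(Module.finrank ℝ E * t ^ 2 / 2))) *
        μ.toSphere Set.univ := by
  have h_subset : {u : Metric.sphere (0 : E) 1 | t < |inner ℝ (u : E) (v : E)|} ⊆
      {u | t ≤ inner ℝ (u : E) (v : E)} ∪
        {u | t ≤ inner ℝ (u : E) ((-v : Metric.sphere (0 : E) 1) : E)} := by
    rintro u (hu : t < |inner ℝ (u : E) (v : E)|)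
    rcases lt_abs.1 hu with h | h
    · exact Or.inl h.le
    · exact Or.inr (by simpa using h.le)
  grw [h_subset, measure_union_le, toSphere_cap_le μ v ht, toSphere_cap_le μ (-v) ht]
  rw [← add_mul, ← two_mul]

end SphericalCap

section SphereUniform

variable {d : ℕ}

instance [NeZero d] : IsProbabilityMeasure (sphereUniform d) where
  measure_univ :=
    ENNReal.inv_mul_cancel (Measure.measure_univ_ne_zero.2 (Measure.toSphere_ne_zero _))
      (measure_ne_top _ _)

lemma sphereUniform_lt_abs_inner_le (v : Metric.sphere (0 : EuclideanSpace ℝ (Fin d)) 1) {t : ℝ}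
    (ht : 0 ≤ t) :
    sphereUniform d {u | t < |inner ℝ (u : EuclideanSpace ℝ (Fin d)) v|} ≤
      2 * ENNReal.ofReal (Real.exp (-(d * t ^ 2 / 2))) := by
  rw [sphereUniform, Measure.smul_apply, smul_eq_mul]
  grw [toSphere_lt_abs_inner_le volume v ht, mul_left_comm, ENNReal.inv_mul_le_one, mul_one]
  rw [finrank_euclideanSpace_fin]

end SphereUniform

section PairwiseUnionBound

variable {ι : Type*} [Fintype ι]

lemma measurePreserving_pi_prodMk {X : ι → Type*} [∀ i, MeasurableSpace (X i)]
    (μ : ∀ i, Measure (X i)) [∀ i, IsProbabilityMeasure (μ i)] {i j : ι} (hij : i ≠ j) :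
    MeasurePreserving (fun x : ∀ i, X i => (x i, x j)) (Measure.pi μ) ((μ i).prod (μ j)) := by
  refine ⟨by fun_prop, ?_⟩
  have h_indep := (ProbabilityTheory.iIndepFun_pi (μ := μ) (X := fun _ => id)
    fun _ => aemeasurable_id).indepFun hij
  have h_map := (ProbabilityTheory.indepFun_iff_map_prod_eq_prod_map_map
    (measurable_pi_apply i).aemeasurable (measurable_pi_apply j).aemeasurable).1 h_indep
  exact h_map.trans <| congrArg₂ Measure.prod (measurePreserving_eval μ i).map_eq
    (measurePreserving_eval μ j).map_eq

variable {X : Type*} [MeasurableSpace X] (μ : Measure X) [IsProbabilityMeasure μ]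
  {S : Set (X × X)} {ε : ENNReal}

lemma measure_pi_prodMk_mem_le (hS : MeasurableSet S) (hε : ∀ v, μ {u | (u, v) ∈ S} ≤ ε)
    {i j : ι} (hij : i ≠ j) :
    Measure.pi (fun _ : ι => μ) {x | (x i, x j) ∈ S} ≤ ε := by
  calc Measure.pi (fun _ : ι => μ) {x | (x i, x j) ∈ S}
      = (μ.prod μ) S :=
        (measurePreserving_pi_prodMk (fun _ => μ) hij).measure_preimage hS.nullMeasurableSet
    _ = ∫⁻ v, μ {u | (u, v) ∈ S} ∂μ := Measure.prod_apply_symm hS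
    _ ≤ ∫⁻ _, ε ∂μ := lintegral_mono hε
    _ = ε := by simp

lemma measure_pi_exists_ne_prodMk_mem_le (hS : MeasurableSet S)
    (hε : ∀ v, μ {u | (u, v) ∈ S} ≤ ε) :
    Measure.pi (fun _ : ι => μ) {x | ∃ i j, i ≠ j ∧ (x i, x j) ∈ S} ≤
      (Fintype.card ι : ENNReal) ^ 2 * ε := by
  classical
  have h_union : {x : ι → X | ∃ i j, i ≠ j ∧ (x i, x j) ∈ S} =
      ⋃ p ∈ (univ : Finset ι).offDiag, {x | (x p.1, x p.2) ∈ S} := by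
    ext x
    simp
  have h_card : #(univ : Finset ι).offDiag ≤ Fintype.card ι ^ 2 := by
    rw [offDiag_card, card_univ, sq]
    exact Nat.sub_le _ _
  calc Measure.pi (fun _ : ι => μ) {x | ∃ i j, i ≠ j ∧ (x i, x j) ∈ S}
      ≤ ∑ p ∈ (univ : Finset ι).offDiag, Measure.pi (fun _ : ι => μ) {x | (x p.1, x p.2) ∈ S} := by
        rw [h_union]
        exact measure_biUnion_finset_le _ _
    _ ≤ #(univ : Finset ι).offDiag • ε :=
        sum_le_card_nsmul _ _ _ fun p hp =>
          measure_pi_prodMk_mem_le μ hS hε (mem_offDiag.1 hp).2.2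
    _ ≤ (Fintype.card ι : ENNReal) ^ 2 * ε := by
        rw [nsmul_eq_mul]
        gcongr
        exact_mod_cast h_card

end PairwiseUnionBound

section Softmax

lemma card_mul_exp_div_sum_exp_mem_Icc {ι : Type*} {s : Finset ι} {f : ι → ℝ} {j : ι}
    (hj : j ∈ s) {r : ℝ} (hf : ∀ k ∈ s, |f k - f j| ≤ r) :
    #s * (Real.exp (f j) / ∑ k ∈ s, Real.exp (f k)) ∈ Set.Icc (Real.exp (-r)) (Real.exp r) := by
  have h_sum_pos : 0 < ∑ k ∈ s, Real.exp (f k) := sum_pos (fun _ _ => Real.exp_pos _) ⟨j, hj⟩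
  have h_upper : ∑ k ∈ s, Real.exp (f k) ≤ #s * Real.exp (f j + r) := by
    rw [← nsmul_eq_mul]
    exact sum_le_card_nsmul _ _ _ fun k hk =>
      Real.exp_le_exp.2 (by linarith [(abs_le.1 (hf k hk)).2])
  have h_lower : #s * Real.exp (f j - r) ≤ ∑ k ∈ s, Real.exp (f k) := by
    rw [← nsmul_eq_mul]
    exact card_nsmul_le_sum _ _ _ fun k hk =>
      Real.exp_le_exp.2 (by linarith [(abs_le.1 (hf k hk)).1])
  rw [← mul_div_assoc, Set.mem_Icc, le_div_iff₀ h_sum_pos, div_le_iff₀ h_sum_pos]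
  constructor
  · calc Real.exp (-r) * ∑ k ∈ s, Real.exp (f k)
        ≤ Real.exp (-r) * (#s * Real.exp (f j + r)) := by gcongr
      _ = #s * Real.exp (f j) := by
        rw [mul_left_comm, ← Real.exp_add, neg_add_cancel_comm_assoc]
  · calc #s * Real.exp (f j)
        = Real.exp r * (#s * Real.exp (f j - r)) := by
          rw [mul_left_comm, ← Real.exp_add, add_sub_cancel]
      _ ≤ Real.exp r * ∑ k ∈ s, Real.exp (f k) := by gcongr

lemma abs_sub_one_le_mul_exp {r y : ℝ} (hy : y ∈ Set.Icc (Real.exp (-r)) (Real.exp r)) :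
    |y - 1| ≤ r * Real.exp r := by
  have hr : 0 ≤ r := by
    have := Real.exp_le_exp.1 (hy.1.trans hy.2)
    linarith
  have h_exp_sub_one : Real.exp r - 1 ≤ r * Real.exp r := by
    have h : (1 - r) * Real.exp r ≤ Real.exp (-r) * Real.exp r := by
      gcongr
      exact Real.one_sub_le_exp_neg r
    rw [← Real.exp_add, neg_add_cancel, Real.exp_zero] at h
    linarith
  have h_le_mul_exp : r ≤ r * Real.exp r := le_mul_of_one_le_right hr (Real.one_le_exp hr)
  rw [abs_le]
  constructor
  · linarith [hy.1, Real.one_sub_le_exp_neg r]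
  · linarith [hy.2]

end Softmax

section PairProbabilities

lemma abs_neg_norm_sub_sq_div_sub_le {E : Type*} [NormedAddCommGroup E] [InnerProductSpace ℝ E]
    {u v w : E} (hu : ‖u‖ = 1) (hv : ‖v‖ = 1) (hw : ‖w‖ = 1) {t : ℝ}
    (huv : |inner ℝ u v| ≤ t) (huw : |inner ℝ u w| ≤ t) (s : ℝ) :
    |-‖u - v‖ ^ 2 / (2 * s ^ 2) - -‖u - w‖ ^ 2 / (2 * s ^ 2)| ≤ 2 * t / s ^ 2 := by
  have h_diff : -‖u - v‖ ^ 2 / (2 * s ^ 2) - -‖u - w‖ ^ 2 / (2 * s ^ 2) =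
      (inner ℝ u v - inner ℝ u w) / s ^ 2 := by
    rw [norm_sub_sq_real, norm_sub_sq_real, hu, hv, hw]
    ring
  rw [h_diff, abs_div, abs_of_nonneg (sq_nonneg s)]
  gcongr
  exact (abs_sub _ _).trans (by linarith)

variable {n d : ℕ} {x : Fin n → EuclideanSpace ℝ (Fin d)} {σ : Fin n → ℝ} {σ₀ t : ℝ} {i j : Fin n}

lemma sub_one_mul_pcond_mem_Icc (hx : ∀ k, ‖x k‖ = 1) (hij : i ≠ j)
    (hinner : ∀ k, i ≠ k → |inner ℝ (x i) (x k)| ≤ t) :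
    ((n : ℝ) - 1) * pcond x σ i j ∈
      Set.Icc (Real.exp (-(2 * t / σ i ^ 2))) (Real.exp (2 * t / σ i ^ 2)) := by
  have h_card : (#(univ.erase i) : ℝ) = n - 1 := by
    rw [cast_card_erase_of_mem (mem_univ i), card_univ, Fintype.card_fin]
  rw [pcond, ← h_card]
  exact card_mul_exp_div_sum_exp_mem_Icc (f := fun k => -‖x i - x k‖ ^ 2 / (2 * σ i ^ 2))
    (mem_erase.2 ⟨hij.symm, mem_univ j⟩) fun k hk =>
      abs_neg_norm_sub_sq_div_sub_le (hx i) (hx k) (hx j) (hinner k (ne_of_mem_erase hk).symm)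
        (hinner j hij) (σ i)

lemma abs_sub_one_mul_pcond_sub_one_le (hx : ∀ k, ‖x k‖ = 1) (hσ₀ : 0 < σ₀) (hσ : σ₀ ≤ σ i)
    (hij : i ≠ j) (hinner : ∀ k, i ≠ k → |inner ℝ (x i) (x k)| ≤ t) :
    |((n : ℝ) - 1) * pcond x σ i j - 1| ≤ 2 / σ₀ ^ 2 * Real.exp (2 / σ₀ ^ 2) * t := by
  have ht : 0 ≤ t := (abs_nonneg _).trans (hinner j hij)
  have hinner' : ∀ k, i ≠ k → |inner ℝ (x i) (x k)| ≤ min t 1 := fun k hk =>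
    le_min (hinner k hk) (by simpa [hx] using abs_real_inner_le_norm (x i) (x k))
  calc |((n : ℝ) - 1) * pcond x σ i j - 1|
      ≤ 2 * min t 1 / σ i ^ 2 * Real.exp (2 * min t 1 / σ i ^ 2) :=
        abs_sub_one_le_mul_exp (sub_one_mul_pcond_mem_Icc hx hij hinner')
    _ ≤ 2 * t / σ₀ ^ 2 * Real.exp (2 * 1 / σ₀ ^ 2) := by
        gcongr
        · exact min_le_left _ _
        · exact min_le_right _ _
    _ = 2 / σ₀ ^ 2 * Real.exp (2 / σ₀ ^ 2) * t := by
        rw [mul_one]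
        ring

lemma abs_choose_two_mul_pmat_sub_one_le (hx : ∀ k, ‖x k‖ = 1) (hσ₀ : 0 < σ₀)
    (hσ : ∀ k, σ₀ ≤ σ k) (hinner : ∀ k l, k ≠ l → |inner ℝ (x k) (x l)| ≤ t) (hij : i ≠ j) :
    |((n : ℝ) * ((n : ℝ) - 1) / 2) * pmat x σ i j - 1| ≤
      2 / σ₀ ^ 2 * Real.exp (2 / σ₀ ^ 2) * t := by
  have hn : (n : ℝ) ≠ 0 := Nat.cast_ne_zero.2 i.pos.ne'
  have h_average : ((n : ℝ) * ((n : ℝ) - 1) / 2) * pmat x σ i j - 1 =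
      ((((n : ℝ) - 1) * pcond x σ j i - 1) + (((n : ℝ) - 1) * pcond x σ i j - 1)) / 2 := by
    rw [pmat]
    field_simp
    ring
  have hi := abs_sub_one_mul_pcond_sub_one_le hx hσ₀ (hσ i) hij (hinner i)
  have hj := abs_sub_one_mul_pcond_sub_one_le hx hσ₀ (hσ j) hij.symm (hinner j)
  rw [h_average, abs_div, abs_two, div_le_iff₀ two_pos]
  exact (abs_add_le _ _).trans (by linarith)

end PairProbabilities

section Concentration

lemma measure_pi_exists_lt_abs_inner_le {d : ℕ} [NeZero d] (n : ℕ) {t : ℝ} (ht : 0 ≤ t) :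
    Measure.pi (fun _ : Fin n => sphereUniform d)
        {x | ∃ i j, i ≠ j ∧ t < |inner ℝ (x i : EuclideanSpace ℝ (Fin d)) (x j)|} ≤
      ENNReal.ofReal (2 * n ^ 2 * Real.exp (-(d * t ^ 2 / 2))) := by
  have h_meas : MeasurableSet {p : Metric.sphere (0 : EuclideanSpace ℝ (Fin d)) 1 ×
      Metric.sphere (0 : EuclideanSpace ℝ (Fin d)) 1 |
        t < |inner ℝ (p.1 : EuclideanSpace ℝ (Fin d)) p.2|} :=
    (isOpen_lt continuous_const (by fun_prop)).measurableSet
  refine (measure_pi_exists_ne_prodMk_mem_le (sphereUniform d) h_meas fun v =>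
    sphereUniform_lt_abs_inner_le v ht).trans_eq ?_
  rw [ENNReal.ofReal_mul (by positivity), ENNReal.ofReal_mul zero_le_two, Fintype.card_fin,
    mul_left_comm, ← mul_assoc]
  simp

lemma le_measure_pi_forall_abs_choose_two_mul_pmat_sub_one_le {d n : ℕ} [NeZero d] {σ₀ : ℝ}
    (hσ₀ : 0 < σ₀) {σ : Fin n → ℝ} (hσ : ∀ k, σ₀ ≤ σ k) {t : ℝ} (ht : 0 ≤ t) :
    ENNReal.ofReal (1 - 2 * n ^ 2 * Real.exp (-(d * t ^ 2 / 2))) ≤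
      Measure.pi (fun _ : Fin n => sphereUniform d)
        {x | ∀ i j, i ≠ j →
          |((n : ℝ) * ((n : ℝ) - 1) / 2) *
              pmat (fun k => (x k : EuclideanSpace ℝ (Fin d))) σ i j - 1| ≤
            2 / σ₀ ^ 2 * Real.exp (2 / σ₀ ^ 2) * t} := by
  set P := Measure.pi (fun _ : Fin n => sphereUniform d)
  set bad : Set (Fin n → Metric.sphere (0 : EuclideanSpace ℝ (Fin d)) 1) :=
    {x | ∃ i j, i ≠ j ∧ t < |inner ℝ (x i : EuclideanSpace ℝ (Fin d)) (x j)|}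
  have h_compl : 1 - P bad ≤ P badᶜ := by
    rw [tsub_le_iff_left, ← measure_univ (μ := P)]
    exact measure_univ_le_add_compl bad
  rw [ENNReal.ofReal_sub _ (by positivity), ENNReal.ofReal_one]
  refine (tsub_le_tsub_left (measure_pi_exists_lt_abs_inner_le n ht) 1).trans
    (h_compl.trans (measure_mono fun x hx i j hij => ?_))
  refine abs_choose_two_mul_pmat_sub_one_le (fun k => norm_eq_of_mem_sphere (x k)) hσ₀ hσ
    (fun k l hkl => ?_) hij
  by_contra! h
  exact hx ⟨k, l, hkl, h⟩

end Concentration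

section Asymptotics

lemma eventually_two_mul_ceil_exp_sq_mul_exp_le {c c' : ℝ} (hc : 0 ≤ c)
    (hcc' : 2 * c + c' < 1 / 2) :
    ∀ᶠ T : ℝ in atTop,
      2 * (⌈Real.exp (c * T)⌉₊ : ℝ) ^ 2 * Real.exp (-(T / 2)) ≤ Real.exp (-(c' * T)) := by
  have h_gap : Tendsto (fun T : ℝ => Real.exp ((1 / 2 - 2 * c - c') * T)) atTop atTop :=
    Real.tendsto_exp_atTop.comp (tendsto_id.const_mul_atTop (by linarith))
  filter_upwards [h_gap.eventually_ge_atTop 8, eventually_ge_atTop 0] with T h_gap_T hT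
  have h_ceil : (⌈Real.exp (c * T)⌉₊ : ℝ) ≤ 2 * Real.exp (c * T) :=
    Nat.ceil_le_two_mul <| by linarith [Real.one_le_exp (mul_nonneg hc hT)]
  calc 2 * (⌈Real.exp (c * T)⌉₊ : ℝ) ^ 2 * Real.exp (-(T / 2))
      ≤ 2 * (2 * Real.exp (c * T)) ^ 2 * Real.exp (-(T / 2)) := by gcongr
    _ = 8 * Real.exp (2 * (c * T) + -(T / 2)) := by
        rw [Real.exp_add, two_mul (c * T), Real.exp_add]
        ring
    _ ≤ Real.exp ((1 / 2 - 2 * c - c') * T) * Real.exp (2 * (c * T) + -(T / 2)) := by gcongr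
    _ = Real.exp (-(c' * T)) := by
        rw [← Real.exp_add]
        ring_nf

lemma mul_rpow_neg_half_add_sq {x : ℝ} (hx : 0 < x) (δ : ℝ) :
    x * (x ^ (-(1 / 2 : ℝ) + δ)) ^ 2 = x ^ (2 * δ) := by
  calc x * (x ^ (-(1 / 2 : ℝ) + δ)) ^ 2
      = x ^ (1 : ℝ) * x ^ ((-(1 / 2 : ℝ) + δ) * (2 : ℕ)) := by
        rw [Real.rpow_one, Real.rpow_mul_natCast hx.le]
    _ = x ^ (2 * δ) := by
        rw [← Real.rpow_add hx]
        push_cast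
        ring_nf

end Asymptotics

theorem stmt11_general {σ₀ : ℝ} (hσ₀ : 0 < σ₀) {δ : ℝ} (hδ : 0 < δ) {c c' : ℝ} (hc : 0 ≤ c)
    (hcc' : 2 * c + c' < 1 / 2) :
    ∀ᶠ d : ℕ in atTop, ∀ n : ℕ, n = ⌈Real.exp (c * (d : ℝ) ^ (2 * δ))⌉₊ →
      ∀ σ : Fin n → ℝ, (∀ k, σ₀ ≤ σ k) →
        ENNReal.ofReal (1 - Real.exp (-(c' * (d : ℝ) ^ (2 * δ)))) ≤
          Measure.pi (fun _ : Fin n => sphereUniform d)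
            {x | ∀ i j, i ≠ j →
              |((n : ℝ) * ((n : ℝ) - 1) / 2) *
                  pmat (fun k => (x k : EuclideanSpace ℝ (Fin d))) σ i j - 1| ≤
                2 / σ₀ ^ 2 * Real.exp (2 / σ₀ ^ 2) * (d : ℝ) ^ (-(1 / 2 : ℝ) + δ)} := by
  have h_exponent : Tendsto (fun d : ℕ => (d : ℝ) ^ (2 * δ)) atTop atTop :=
    (tendsto_rpow_atTop (by linarith)).comp tendsto_natCast_atTop_atTop
  filter_upwards [h_exponent.eventually (eventually_two_mul_ceil_exp_sq_mul_exp_le hc hcc'),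
    eventually_gt_atTop 0] with d h_union hd n hn σ hσ
  have : NeZero d := ⟨hd.ne'⟩
  rw [← hn, ← mul_rpow_neg_half_add_sq (Nat.cast_pos.2 hd) δ] at h_union
  grw [← le_measure_pi_forall_abs_choose_two_mul_pmat_sub_one_le hσ₀ hσ (by positivity)]
  rw [← mul_rpow_neg_half_add_sq (Nat.cast_pos.2 hd) δ]
  gcongr

/-- fix `σ > 0` and `δ ∈ (0, 1/2)`. There are constants `c, c', C > 0` such
that for all sufficiently large `d`, taking `n = ⌈e^{c·d^{2δ}}⌉` i.i.d. uniform points on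
`S^{d-1}` and forming the t-SNE pair probabilities with all bandwidths `σ`, with probability
at least `1 - e^{-c'·d^{2δ}}` every pair `{i,j}` satisfies
`|C(n,2)·p_{ij} - 1| ≤ C·d^{-1/2+δ}`. -/
theorem stmt11 (σ : ℝ) (hσ : 0 < σ) (δ : ℝ) (hδ : 0 < δ) (hδ' : δ < 1 / 2) :
    ∃ c : ℝ, 0 < c ∧ ∃ c' : ℝ, 0 < c' ∧ ∃ C : ℝ, 0 < C ∧
      ∀ᶠ d : ℕ in atTop, ∀ n : ℕ, n = ⌈Real.exp (c * (d : ℝ) ^ (2 * δ))⌉₊ →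
        ENNReal.ofReal (1 - Real.exp (-(c' * (d : ℝ) ^ (2 * δ)))) ≤
          Measure.pi (fun _ : Fin n => sphereUniform d)
            {x : Fin n → Metric.sphere (0 : EuclideanSpace ℝ (Fin d)) 1 |
              ∀ i j : Fin n, i ≠ j →
                |((n : ℝ) * ((n : ℝ) - 1) / 2) *
                    pmat (fun k => (x k : EuclideanSpace ℝ (Fin d))) (fun _ => σ) i j - 1| ≤
                  C * (d : ℝ) ^ (-(1 / 2 : ℝ) + δ)} := by
  refine ⟨1 / 8, by norm_num, 1 / 8, by norm_num, 2 / σ ^ 2 * Real.exp (2 / σ ^ 2),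
    by positivity, ?_⟩
  filter_upwards [stmt11_general hσ hδ (c := 1 / 8) (c' := 1 / 8) (by norm_num) (by norm_num)]
    with d hd n hn
  exact hd n hn (fun _ => σ) fun _ => le_rfl

end
end

section
/- Let x_1, …, x_n be unit vectors in ℝ^d (n ≥ 2) such that |⟨x_i, x_j⟩| ≤ ε for all i ≠ j, and let all bandwidths equal σ > 0. Then for all i ≠ j, e^{−2ε/σ²} ≤ (n−1)·p_{j|i} ≤ e^{2ε/σ²}, and consequently e^{−2ε/σ²} ≤ C(n,2)·p_{ij} ≤ e^{2ε/σ²}. -/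
open Finset

noncomputable section

/-!
Multiplied by `n - 1`, the probability `p_{j|i}` is the ratio of one Gaussian weight to the mean of
all the weights seen from `x_i`, so it lies within `e^{±δ}` of `1` as soon as the exponents of these
weights differ by at most `δ`. For unit vectors with inner products in `[-ε, ε]` the squared
distances differ by at most `4ε`, which gives `δ = 2ε/σ²`. Finally `C(n,2) p_{ij}` is the average of
`(n - 1) p_{i|j}` and `(n - 1) p_{j|i}`, hence obeys the same bounds.
-/

section ExpRatio

variable {ι : Type*} {s : Finset ι} {z : ι → ℝ} {a δ : ℝ}

theorem card_mul_exp_div_sum_exp_le (h : ∀ k ∈ s, a - z k ≤ δ) :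
    #s * (Real.exp a / ∑ k ∈ s, Real.exp (z k)) ≤ Real.exp δ := by
  have sum_ge : #s * Real.exp (a - δ) ≤ ∑ k ∈ s, Real.exp (z k) := by
    rw [← nsmul_eq_mul]
    exact card_nsmul_le_sum s _ _ fun k hk => Real.exp_le_exp.2 (by linarith [h k hk])
  rw [← mul_div_assoc]
  refine div_le_of_le_mul₀ (sum_nonneg fun k _ => (Real.exp_pos _).le) (Real.exp_pos δ).le ?_
  calc #s * Real.exp a = Real.exp δ * (#s * Real.exp (a - δ)) := by
        rw [mul_left_comm, ← Real.exp_add, add_sub_cancel]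
    _ ≤ Real.exp δ * ∑ k ∈ s, Real.exp (z k) := by gcongr

theorem exp_neg_le_card_mul_exp_div_sum_exp (hs : s.Nonempty) (h : ∀ k ∈ s, z k - a ≤ δ) :
    Real.exp (-δ) ≤ #s * (Real.exp a / ∑ k ∈ s, Real.exp (z k)) := by
  have sum_le : ∑ k ∈ s, Real.exp (z k) ≤ #s * Real.exp (a + δ) := by
    rw [← nsmul_eq_mul]
    exact sum_le_card_nsmul s _ _ fun k hk => Real.exp_le_exp.2 (by linarith [h k hk])
  rw [← mul_div_assoc, le_div_iff₀ (sum_pos (fun k _ => Real.exp_pos _) hs)]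
  calc Real.exp (-δ) * ∑ k ∈ s, Real.exp (z k)
      ≤ Real.exp (-δ) * (#s * Real.exp (a + δ)) := by gcongr
    _ = #s * Real.exp a := by rw [mul_left_comm, ← Real.exp_add, neg_add_cancel_comm_assoc]

end ExpRatio

section SNE

variable {n d : ℕ} {x : Fin n → EuclideanSpace ℝ (Fin d)} {σ : Fin n → ℝ} {i j : Fin n} {δ : ℝ}

theorem cast_card_univ_erase_fin (i : Fin n) : (#(univ.erase i) : ℝ) = n - 1 := by
  rw [cast_card_erase_of_mem (mem_univ i), card_univ, Fintype.card_fin]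

theorem sub_one_mul_pcond_le
    (h : ∀ k ≠ i, (‖x i - x k‖ ^ 2 - ‖x i - x j‖ ^ 2) / (2 * σ i ^ 2) ≤ δ) :
    ((n : ℝ) - 1) * pcond x σ i j ≤ Real.exp δ := by
  rw [← cast_card_univ_erase_fin i]
  refine card_mul_exp_div_sum_exp_le fun k hk => ?_
  rw [← sub_div, neg_sub_neg]
  exact h k (ne_of_mem_erase hk)

theorem exp_neg_le_sub_one_mul_pcond (hji : j ≠ i)
    (h : ∀ k ≠ i, (‖x i - x j‖ ^ 2 - ‖x i - x k‖ ^ 2) / (2 * σ i ^ 2) ≤ δ) :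
    Real.exp (-δ) ≤ ((n : ℝ) - 1) * pcond x σ i j := by
  rw [← cast_card_univ_erase_fin i]
  refine exp_neg_le_card_mul_exp_div_sum_exp ⟨j, mem_erase.2 ⟨hji, mem_univ j⟩⟩ fun k hk => ?_
  rw [← sub_div, neg_sub_neg]
  exact h k (ne_of_mem_erase hk)

theorem mul_sub_one_div_two_mul_pmat (x : Fin n → EuclideanSpace ℝ (Fin d)) (σ : Fin n → ℝ)
    (i j : Fin n) :
    ((n : ℝ) * ((n : ℝ) - 1) / 2) * pmat x σ i j =
      (((n : ℝ) - 1) * pcond x σ j i + ((n : ℝ) - 1) * pcond x σ i j) / 2 := by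
  have hn : (n : ℝ) ≠ 0 := Nat.cast_ne_zero.2 i.pos.ne'
  rw [pmat]
  field_simp

end SNE

theorem norm_sub_sq_sub_norm_sub_sq {E : Type*} [NormedAddCommGroup E] [InnerProductSpace ℝ E]
    (u : E) {v w : E} (h : ‖v‖ = ‖w‖) :
    ‖u - v‖ ^ 2 - ‖u - w‖ ^ 2 = 2 * (inner ℝ u w - inner ℝ u v) := by
  rw [norm_sub_sq_real, norm_sub_sq_real, h]
  ring

theorem stmt12_general {d n : ℕ} (x : Fin n → EuclideanSpace ℝ (Fin d)) {ε s : ℝ}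
    {σ : Fin n → ℝ} (hs : 0 < s) (hσ : ∀ i, s ≤ σ i)
    (hx : ∀ i j k, j ≠ i → k ≠ i → ‖x i - x j‖ ^ 2 - ‖x i - x k‖ ^ 2 ≤ 4 * ε) :
    ∀ i j : Fin n, i ≠ j →
      (Real.exp (-(2 * ε) / s ^ 2) ≤ ((n : ℝ) - 1) * pcond x σ i j ∧
        ((n : ℝ) - 1) * pcond x σ i j ≤ Real.exp (2 * ε / s ^ 2)) ∧
      (Real.exp (-(2 * ε) / s ^ 2) ≤ ((n : ℝ) * ((n : ℝ) - 1) / 2) * pmat x σ i j ∧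
        ((n : ℝ) * ((n : ℝ) - 1) / 2) * pmat x σ i j ≤ Real.exp (2 * ε / s ^ 2)) := by
  intro i j hij
  have hε : 0 ≤ 4 * ε := (sub_self _).symm.trans_le (hx i j j hij.symm hij.symm)
  have exponent_le (i j k : Fin n) (hj : j ≠ i) (hk : k ≠ i) :
      (‖x i - x j‖ ^ 2 - ‖x i - x k‖ ^ 2) / (2 * σ i ^ 2) ≤ 2 * ε / s ^ 2 :=
    calc (‖x i - x j‖ ^ 2 - ‖x i - x k‖ ^ 2) / (2 * σ i ^ 2)
        ≤ 4 * ε / (2 * s ^ 2) := by gcongr; exacts [hx i j k hj hk, hσ i]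
      _ = 2 * ε / s ^ 2 := by ring
  have pcond_bounds (i j : Fin n) (hji : j ≠ i) :
      Real.exp (-(2 * ε) / s ^ 2) ≤ ((n : ℝ) - 1) * pcond x σ i j ∧
        ((n : ℝ) - 1) * pcond x σ i j ≤ Real.exp (2 * ε / s ^ 2) := by
    rw [neg_div]
    exact ⟨exp_neg_le_sub_one_mul_pcond hji fun k hk => exponent_le i j k hji hk,
      sub_one_mul_pcond_le fun k hk => exponent_le i k j hk hji⟩
  obtain ⟨lower_ij, upper_ij⟩ := pcond_bounds i j hij.symm
  obtain ⟨lower_ji, upper_ji⟩ := pcond_bounds j i hij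
  rw [mul_sub_one_div_two_mul_pmat]
  exact ⟨⟨lower_ij, upper_ij⟩, by linarith, by linarith⟩

/-- if `x_1, …, x_n` (`n ≥ 2`) are unit vectors in `ℝ^d` with
`|⟨x_i, x_j⟩| ≤ ε` for all `i ≠ j`, and all bandwidths equal `σ > 0`, then for all `i ≠ j`,
`e^{-2ε/σ²} ≤ (n-1)·p_{j|i} ≤ e^{2ε/σ²}` and `e^{-2ε/σ²} ≤ C(n,2)·p_{ij} ≤ e^{2ε/σ²}`. -/
theorem stmt12 (d n : ℕ) (hn : 2 ≤ n) (x : Fin n → EuclideanSpace ℝ (Fin d))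
    (hx : ∀ i, ‖x i‖ = 1) (ε : ℝ) (σ : ℝ) (hσ : 0 < σ)
    (hip : ∀ i j : Fin n, i ≠ j → |(inner ℝ (x i) (x j) : ℝ)| ≤ ε) :
    ∀ i j : Fin n, i ≠ j →
      (Real.exp (-(2 * ε) / σ ^ 2) ≤ ((n : ℝ) - 1) * pcond x (fun _ => σ) i j ∧
        ((n : ℝ) - 1) * pcond x (fun _ => σ) i j ≤ Real.exp (2 * ε / σ ^ 2)) ∧
      (Real.exp (-(2 * ε) / σ ^ 2) ≤ ((n : ℝ) * ((n : ℝ) - 1) / 2) * pmat x (fun _ => σ) i j ∧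
        ((n : ℝ) * ((n : ℝ) - 1) / 2) * pmat x (fun _ => σ) i j ≤ Real.exp (2 * ε / σ ^ 2)) := by
  refine stmt12_general x hσ (fun _ => le_rfl) fun i j k hj hk => ?_
  rw [norm_sub_sq_sub_norm_sub_sq (x i) ((hx j).trans (hx k).symm)]
  linarith [(abs_le.1 (hip i j hj.symm)).1, (abs_le.1 (hip i k hk.symm)).2]

end
end

section
/- Let p be a probability mass function on a finite set S of cardinality N ≥ 1, and suppose |N·p(x) − 1| ≤ ε for all x ∈ S. Then D(p‖U) ≤ ε², where U is the uniform distribution on S. -/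
/-!
The logarithm lies below its tangent at `1`, so `t log t + 1 - t ≤ (t - 1)²` for `t ≥ 0`. Averaging
over `q` with `t = p / q` bounds `D(p‖q)` by the `χ²`-divergence, which is the `q`-average of
`(p / q - 1)²` and hence at most `ε²` when the density `p / q` is within `ε` of `1`.
-/

open InformationTheory (klFun klFun_apply klFun_zero)

theorem klFun_le_sub_one_sq {t : ℝ} (ht : 0 ≤ t) : klFun t ≤ (t - 1) ^ 2 := by
  rcases ht.eq_or_lt with rfl | ht
  · simp [klFun_zero]
  · calc klFun t = t * Real.log t + 1 - t := klFun_apply t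
      _ ≤ t * (t - 1) + 1 - t := by gcongr; exact Real.log_le_sub_one_of_pos ht
      _ = (t - 1) ^ 2 := by ring

theorem mul_log_div_eq_mul_klFun_add_sub (a : ℝ) {b : ℝ} (hb : b ≠ 0) :
    a * Real.log (a / b) = b * klFun (a / b) + (a - b) := by
  rw [klFun_apply]
  field_simp
  ring

section

variable {ι : Type*} {s : Finset ι} {p q : ι → ℝ}

/-- Pearson's `χ²`-divergence of `p` from `q` on `s`, an upper bound for the Kullback–Leibler
divergence. It is written as a `q`-average of `(p / q - 1)²`, which for `q` without zeros on `s` is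
the usual `∑ (p - q)² / q`. -/
noncomputable def chiSqDiv (s : Finset ι) (p q : ι → ℝ) : ℝ :=
  ∑ x ∈ s, q x * (p x / q x - 1) ^ 2

theorem sum_mul_log_div_eq_sum_mul_klFun (hq : ∀ x ∈ s, q x ≠ 0)
    (hpq : ∑ x ∈ s, p x = ∑ x ∈ s, q x) :
    ∑ x ∈ s, p x * Real.log (p x / q x) = ∑ x ∈ s, q x * klFun (p x / q x) := by
  rw [Finset.sum_congr rfl fun x hx => mul_log_div_eq_mul_klFun_add_sub (p x) (hq x hx),
    Finset.sum_add_distrib, Finset.sum_sub_distrib, hpq, sub_self, add_zero]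

theorem sum_mul_log_div_le_chiSqDiv (hp : ∀ x ∈ s, 0 ≤ p x) (hq : ∀ x ∈ s, 0 < q x)
    (hpq : ∑ x ∈ s, p x = ∑ x ∈ s, q x) :
    ∑ x ∈ s, p x * Real.log (p x / q x) ≤ chiSqDiv s p q := by
  rw [sum_mul_log_div_eq_sum_mul_klFun (fun x hx => (hq x hx).ne') hpq]
  exact Finset.sum_le_sum fun x hx => mul_le_mul_of_nonneg_left
    (klFun_le_sub_one_sq (div_nonneg (hp x hx) (hq x hx).le)) (hq x hx).le

theorem chiSqDiv_le_sum_mul_sq {ε : ℝ} (hq : ∀ x ∈ s, 0 ≤ q x)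
    (hε : ∀ x ∈ s, |p x / q x - 1| ≤ ε) :
    chiSqDiv s p q ≤ (∑ x ∈ s, q x) * ε ^ 2 := by
  rw [chiSqDiv, Finset.sum_mul]
  exact Finset.sum_le_sum fun x hx => mul_le_mul_of_nonneg_left
    (sq_le_sq.2 ((hε x hx).trans (le_abs_self ε))) (hq x hx)

theorem stmt16_general {ε : ℝ} (hp0 : ∀ x ∈ s, 0 ≤ p x) (hq0 : ∀ x ∈ s, 0 < q x)
    (hp1 : ∑ x ∈ s, p x = 1) (hq1 : ∑ x ∈ s, q x = 1)
    (hε : ∀ x ∈ s, |p x / q x - 1| ≤ ε) :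
    ∑ x ∈ s, p x * Real.log (p x / q x) ≤ ε ^ 2 :=
  calc ∑ x ∈ s, p x * Real.log (p x / q x)
    _ ≤ chiSqDiv s p q := sum_mul_log_div_le_chiSqDiv hp0 hq0 (hp1.trans hq1.symm)
    _ ≤ (∑ x ∈ s, q x) * ε ^ 2 := chiSqDiv_le_sum_mul_sq (fun x hx => (hq0 x hx).le) hε
    _ = ε ^ 2 := by rw [hq1, one_mul]

end

/-- if `p` is a probability mass function on a finite set `S` of cardinality
`N ≥ 1` with `|N·p(x) - 1| ≤ ε` for all `x`, then `D(p‖U) ≤ ε²`, where `U` is the uniform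
distribution on `S`. -/
theorem stmt16 {S : Type*} [Fintype S] (hS : 1 ≤ Fintype.card S)
    (p : S → ℝ) (ε : ℝ) (hp0 : ∀ x, 0 ≤ p x) (hp1 : ∑ x, p x = 1)
    (hε : ∀ x, |(Fintype.card S : ℝ) * p x - 1| ≤ ε) :
    ∑ x, p x * Real.log (p x / (1 / (Fintype.card S : ℝ))) ≤ ε ^ 2 := by
  have hN : (0 : ℝ) < Fintype.card S := by exact_mod_cast hS
  exact stmt16_general (q := fun _ => 1 / (Fintype.card S : ℝ)) (fun x _ => hp0 x)
    (fun _ _ => one_div_pos.2 hN) hp1 (by simp [hN.ne']) fun x _ => by simpa [mul_comm] using hε x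
end
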